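/- Let G : B₁ × ℝ^d × Sym(d) → ℝ be continuous and degenerate elliptic, and let u ∈ C(B₁) be a viscosity solution of G(x, Du, D²u) = 0 in B₁. Let Ω ⊂ B₁ be open, let ψ be twice continuously differentiable in a neighborhood of cl(Ω) × cl(Ω), define v(x,y) := u(x) − u(y), and suppose (x̄, ȳ) ∈ Ω × Ω is a local maximum point of v − ψ in Ω × Ω. Then for each ε > 0 there exist matrices X, Y ∈ Sym(d) such that G(x̄, D_xψ(x̄,ȳ), X) ≤ 0 ≤ G(ȳ, −D_yψ(x̄,ȳ), Y), and the matrix inequality −(1/ε + ‖A‖) I ≤ [[X, 0],[0, −Y]] ≤ A + εA² holds in Sym(2d), where A = D²ψ(x̄,ȳ) ∈ Sym(2d) and I is the identity of Sym(2d). -/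

import Mathlib

/-!
This is the theorem on sums for viscosity solutions. Writing `a = D_x ψ`, `c = D_y ψ` and
`A = D²ψ` at the maximum point, put `u₁ x = u (xb + x) - u xb - ⟪a, x⟫` and
`u₂ y = -u (yb + y) + u yb - ⟪c, y⟫`. Maximality, Taylor's formula for `ψ` and Young's inequality
(`quadratic_le_shifted`) give, for small `x`, `y` and all `ω`,
`u₁ x + u₂ y ≤ ½ b(ω, ω) + lam / 2 * |(x, y) - ω|²`, where `b` is `A + ε A²` and
`lam = 1 / ε + ‖A‖`, both up to an arbitrarily small multiple of the identity.

For each `uᵢ` consider the convex Lipschitz function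
`f ω = max_x (lam ⟪x, ω⟫ + uᵢ x - lam / 2 |x|²)` over a small closed ball, which is the
sup-convolution of `uᵢ` plus `lam / 2 |ω|²`. Its Moreau envelope `eᵢ` with parameter `mu` is
convex and `C^{1,1}` (`exists_envelope`), and `e₁ ω₁ + e₂ ω₂ - ½ b(ω, ω) - lam / 2 |ω|²` has a
maximum at `0`, strict after a small quadratic perturbation. Jensen's lemma (`jensen`) yields
points near `0` where this function is twice differentiable with nonpositive Hessian: the
gradients at points of contact with small linear functions fill a ball, whereas by Rademacher's
theorem the gradient is not differentiable only on a null set, which a Lipschitz map sends to a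
null set.

At such a point the Hessian of `eᵢ` is less than `1 / mu`. Then the Young inequality
`uᵢ x ≤ (lam + lam² mu) / 2 |x|² - lam ⟪x, ω⟫ + eᵢ ω` is an equality at `x = ∇eᵢ ω / lam`, and
translating `x` and `ω` by the same vector turns the expansion of `eᵢ` into a second-order
upper bound for `uᵢ` near `x` (`Envelope.jet`). The lower bound `-lam` on the new Hessians is
the convexity of `eᵢ`, the upper bound is the one from Jensen's lemma (`exists_approx_jets`,
`exists_jets`). Testing the equation with quadratic polynomials gives approximate versions of
all the claims at points converging to `xb` and `yb`; the matrices stay bounded, and a limit along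
an ultrafilter together with the continuity of `G` concludes.
-/

open Metric Set Filter
open scoped RealInnerProductSpace

noncomputable section
abbrev Euc (d : ℕ) := EuclideanSpace ℝ (Fin d)
abbrev Mat (d : ℕ) := Matrix (Fin d) (Fin d) ℝ

noncomputable def matOpNorm {n : Type*} [Fintype n] [DecidableEq n]
    (M : Matrix n n ℝ) : ℝ := ‖Matrix.toEuclideanCLM (𝕜 := ℝ) M‖

def UniformlyElliptic {d : ℕ} (lam Lam : ℝ) (F : Mat d → ℝ) : Prop :=
  F 0 = 0 ∧ ∀ M N : Mat d, M.IsHermitian → N.PosSemidef →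
    lam * matOpNorm N ≤ F (M + N) - F M ∧ F (M + N) - F M ≤ Lam * matOpNorm N

noncomputable def hessM {d : ℕ} (φ : Euc d → ℝ) (x : Euc d) : Mat d :=
  Matrix.of fun i j =>
    iteratedFDeriv ℝ 2 φ x ![EuclideanSpace.single i 1, EuclideanSpace.single j 1]

def ViscSubSol {d : ℕ} (F : Mat d → ℝ) (θ f : Euc d → ℝ) (q : Euc d) (u : Euc d → ℝ) : Prop :=
  ∀ x₀ ∈ ball (0 : Euc d) 1, ∀ φ : Euc d → ℝ, ContDiffAt ℝ 2 φ x₀ →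
    IsLocalMax (fun x => u x - φ x) x₀ → q + gradient φ x₀ ≠ 0 →
      f x₀ ≤ ‖q + gradient φ x₀‖ ^ (θ x₀) * F (hessM φ x₀)

def ViscSuperSol {d : ℕ} (F : Mat d → ℝ) (θ f : Euc d → ℝ) (q : Euc d) (u : Euc d → ℝ) : Prop :=
  ∀ x₀ ∈ ball (0 : Euc d) 1, ∀ φ : Euc d → ℝ, ContDiffAt ℝ 2 φ x₀ →
    IsLocalMin (fun x => u x - φ x) x₀ → q + gradient φ x₀ ≠ 0 →
      ‖q + gradient φ x₀‖ ^ (θ x₀) * F (hessM φ x₀) ≤ f x₀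

def ViscSol {d : ℕ} (F : Mat d → ℝ) (θ f : Euc d → ℝ) (q : Euc d) (u : Euc d → ℝ) : Prop :=
  ViscSubSol F θ f q u ∧ ViscSuperSol F θ f q u

def ViscSubSolPure {d : ℕ} (F : Mat d → ℝ) (g : Euc d → ℝ) (u : Euc d → ℝ)
    (s : Set (Euc d)) : Prop :=
  ∀ x₀ ∈ s, ∀ φ : Euc d → ℝ, ContDiffAt ℝ 2 φ x₀ →
    IsLocalMax (fun x => u x - φ x) x₀ → g x₀ ≤ F (hessM φ x₀)

def ViscSuperSolPure {d : ℕ} (F : Mat d → ℝ) (g : Euc d → ℝ) (u : Euc d → ℝ)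
    (s : Set (Euc d)) : Prop :=
  ∀ x₀ ∈ s, ∀ φ : Euc d → ℝ, ContDiffAt ℝ 2 φ x₀ →
    IsLocalMin (fun x => u x - φ x) x₀ → F (hessM φ x₀) ≤ g x₀

def ViscSolPure {d : ℕ} (F : Mat d → ℝ) (g : Euc d → ℝ) (u : Euc d → ℝ)
    (s : Set (Euc d)) : Prop :=
  ViscSubSolPure F g u s ∧ ViscSuperSolPure F g u s

noncomputable def prodBasis {d : ℕ} : (Fin d ⊕ Fin d) → Euc d × Euc d
  | Sum.inl i => (EuclideanSpace.single i 1, 0)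
  | Sum.inr j => (0, EuclideanSpace.single j 1)

/-- Hessian of a function on `Euc d × Euc d` as a `2d × 2d` matrix. -/
noncomputable def hess2 {d : ℕ} (ψ : Euc d × Euc d → ℝ) (z : Euc d × Euc d) :
    Matrix (Fin d ⊕ Fin d) (Fin d ⊕ Fin d) ℝ :=
  Matrix.of fun i j => iteratedFDeriv ℝ 2 ψ z ![prodBasis i, prodBasis j]

/-- The partial order on symmetric matrices: `A ≼ B` iff `B - A` is positive semidefinite. -/
def MatLE {n : Type*} [Fintype n] (A B : Matrix n n ℝ) : Prop := (B - A).PosSemidef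

open Topology MeasureTheory

/-! ### Second-order calculus and Jensen's lemma -/

/-- Second-order Taylor expansion under the sole assumption that the derivative is differentiable
at the base point. -/
theorem taylor_two {Z : Type*} [NormedAddCommGroup Z] [NormedSpace ℝ Z]
    {f : Z → ℝ} {f' : Z → Z →L[ℝ] ℝ} {f'' : Z →L[ℝ] Z →L[ℝ] ℝ} {x : Z}
    (hf : ∀ᶠ y in 𝓝 x, HasFDerivAt f (f' y) y) (hf' : HasFDerivAt f' f'' x)
    {η : ℝ} (hη : 0 < η) :
    ∀ᶠ k in 𝓝 (0 : Z), |f (x + k) - f x - f' x k - (1 / 2) * f'' k k| ≤ η * ‖k‖ ^ 2 := by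
  rw [hasFDerivAt_iff_isLittleO_nhds_zero] at hf'
  have h1 := hf'.def hη
  have h2 : ∀ᶠ k in 𝓝 (0 : Z), HasFDerivAt f (f' (x + k)) (x + k) := by
    have : Tendsto (fun k : Z => x + k) (𝓝 0) (𝓝 x) := by
      have : Continuous (fun k : Z => x + k) := by fun_prop
      simpa using this.tendsto 0
    exact this.eventually hf
  obtain ⟨r, hr, hball⟩ := Metric.eventually_nhds_iff_ball.1 (h1.and h2)
  filter_upwards [Metric.ball_mem_nhds (0 : Z) hr] with k hk
  have hmem : ∀ t ∈ Set.Icc (0 : ℝ) 1, t • k ∈ Metric.ball (0 : Z) r := by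
    intro t ht
    rw [mem_ball_zero_iff] at hk ⊢
    rw [norm_smul, Real.norm_eq_abs, abs_of_nonneg ht.1]
    nlinarith [norm_nonneg k, ht.1, ht.2]
  let φ : ℝ → ℝ := fun t => f (x + t • k) - t * f' x k - t ^ 2 * ((1 / 2) * f'' k k)
  let φ' : ℝ → ℝ := fun t => f' (x + t • k) k - f' x k - t * f'' k k
  have hd : ∀ t ∈ Set.Icc (0 : ℝ) 1, HasDerivWithinAt φ (φ' t) (Set.Icc 0 1) t := by
    intro t ht
    have ha : HasDerivAt (fun t : ℝ => x + t • k) k t := by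
      simpa using ((hasDerivAt_id t).smul_const k).const_add x
    have hb := (hball _ (hmem t ht)).2.comp_hasDerivAt t ha
    have hc : HasDerivAt (fun t : ℝ => t * f' x k) (f' x k) t := by
      simpa using (hasDerivAt_id t).mul_const (f' x k)
    have hd : HasDerivAt (fun t : ℝ => t ^ 2 * ((1 / 2) * f'' k k)) (t * f'' k k) t := by
      have := (hasDerivAt_pow 2 t).mul_const ((1 / 2) * f'' k k)
      refine this.congr_deriv ?_
      norm_num
      ring
    exact ((hb.sub hc).sub hd).hasDerivWithinAt
  have hbd : ∀ t ∈ Set.Ico (0 : ℝ) 1, ‖φ' t‖ ≤ η * ‖k‖ ^ 2 := by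
    intro t ht
    have ht' : t ∈ Set.Icc (0 : ℝ) 1 := ⟨ht.1, ht.2.le⟩
    have h3 := (hball _ (hmem t ht')).1
    have h4 : φ' t = (f' (x + t • k) - f' x - f'' (t • k)) k := by
      simp [φ']
    rw [h4]
    refine (ContinuousLinearMap.le_opNorm _ _).trans ?_
    have h5 : ‖t • k‖ ≤ ‖k‖ := by
      rw [norm_smul, Real.norm_eq_abs, abs_of_nonneg ht.1]
      nlinarith [norm_nonneg k, ht.1, ht.2]
    have h6 : ‖f' (x + t • k) - f' x - f'' (t • k)‖ ≤ η * ‖k‖ :=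
      h3.trans (by gcongr)
    calc _ ≤ η * ‖k‖ * ‖k‖ := by gcongr
      _ = _ := by ring
  have := norm_image_sub_le_of_norm_deriv_le_segment_01' hd hbd
  simp only [φ, Real.norm_eq_abs] at this
  convert this using 2
  simp; ring

/-- If `f` minus its linearisation at `x` has a local maximum at `x`, then the second derivative
of `f` at `x` is nonpositive. -/
theorem second_order_max {Z : Type*} [NormedAddCommGroup Z] [NormedSpace ℝ Z]
    {f : Z → ℝ} {f' : Z → Z →L[ℝ] ℝ} {f'' : Z →L[ℝ] Z →L[ℝ] ℝ} {x : Z}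
    (hf : ∀ᶠ y in 𝓝 x, HasFDerivAt f (f' y) y) (hf' : HasFDerivAt f' f'' x)
    (hmax : IsLocalMax (fun y => f y - f' x y) x) (k : Z) : f'' k k ≤ 0 := by
  by_contra! hpos
  have hk : k ≠ 0 := by
    rintro rfl
    simp at hpos
  have hk' : 0 < ‖k‖ := norm_pos_iff.2 hk
  have hη : 0 < f'' k k / (4 * ‖k‖ ^ 2) := by positivity
  have h1 := taylor_two hf hf' hη
  have htend : Tendsto (fun t : ℝ => t • k) (𝓝[>] 0) (𝓝 0) := by
    have : Continuous (fun t : ℝ => t • k) := by fun_prop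
    simpa using (this.tendsto 0).mono_left nhdsWithin_le_nhds
  have htend2 : Tendsto (fun t : ℝ => x + t • k) (𝓝[>] 0) (𝓝 x) := by
    simpa using htend.const_add x
  obtain ⟨t, ⟨h2, h3⟩, ht⟩ :=
    (((htend.eventually h1).and (htend2.eventually hmax)).and self_mem_nhdsWithin).exists
  have ht : 0 < t := ht
  have h4 := (abs_le.1 h2).1
  rw [norm_smul, Real.norm_eq_abs, abs_of_pos ht] at h4
  have h5 : f'' k k / (4 * ‖k‖ ^ 2) * (t * ‖k‖) ^ 2 = t ^ 2 * f'' k k / 4 := by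
    field_simp
  rw [h5] at h4
  simp only [map_add, map_smul, smul_eq_mul, smul_apply] at h3 h4
  have : 0 < t ^ 2 * f'' k k := by positivity
  nlinarith

/-- Jensen's lemma for a `C^{1,1}` function with a strict maximum at `0`: arbitrarily close to `0`
there is a point of twice differentiability with nonpositive Hessian. Every linear form of norm less
than `c * s` is the derivative of `Φ` at a point of the `s`-ball where `Φ` minus that form has a
local maximum; the set of these points cannot be null, so it meets the set of differentiability of
`Φ'`. -/
theorem jensen {Z : Type*} [NormedAddCommGroup Z] [NormedSpace ℝ Z] [FiniteDimensional ℝ Z]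
    {Φ : Z → ℝ} {Φ' : Z → Z →L[ℝ] ℝ} {K : NNReal} (hΦ : ∀ z, HasFDerivAt Φ (Φ' z) z)
    (hLip : LipschitzWith K Φ') {c : ℝ} (hc : 0 < c) (h0 : 0 ≤ Φ 0)
    (hle : ∀ z, Φ z ≤ -(c * ‖z‖ ^ 2)) {s : ℝ} (hs : 0 < s) :
    ∃ z, ‖z‖ < s ∧ ∃ Φ'' : Z →L[ℝ] Z →L[ℝ] ℝ, HasFDerivAt Φ' Φ'' z ∧ ∀ k, Φ'' k k ≤ 0 := by
  by_contra! hno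
  borelize Z
  borelize (Z →L[ℝ] ℝ)
  have hrank : Module.finrank ℝ (Z →L[ℝ] ℝ) = Module.finrank ℝ Z := by
    rw [← Subspace.dual_finrank_eq (K := ℝ) (V := Z)]
    exact (LinearMap.toContinuousLinearMap (𝕜 := ℝ) (E := Z) (F' := ℝ)).symm.finrank_eq
  -- the points where `Φ` is touched from above by an affine function
  let S : Set Z := {z | ‖z‖ < s ∧ IsLocalMax (fun y => Φ y - Φ' z y) z}
  have hsub : S ⊆ {z | ¬ DifferentiableAt ℝ Φ' z} := by
    rintro z ⟨hz, hm⟩ hdiff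
    obtain ⟨k, hk⟩ := hno z hz _ hdiff.hasFDerivAt
    exact absurd (second_order_max (Eventually.of_forall hΦ) hdiff.hasFDerivAt hm k)
      (not_le.2 hk)
  have hnull : (μH[(Module.finrank ℝ Z : ℝ)] : Measure Z) S = 0 := by
    refine measure_mono_null hsub ?_
    exact hLip.ae_differentiableAt
  have himg : (μH[(Module.finrank ℝ (Z →L[ℝ] ℝ) : ℝ)] : Measure (Z →L[ℝ] ℝ)) (Set.image Φ' S) = 0 := by
    rw [hrank]
    have := hLip.hausdorffMeasure_image_le (d := (Module.finrank ℝ Z : ℝ)) (by positivity) S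
    rw [hnull, mul_zero] at this
    exact le_antisymm this zero_le
  have hcover : Metric.ball (0 : Z →L[ℝ] ℝ) (c * s) ⊆ Set.image Φ' S := by
    intro p hp
    rw [mem_ball_zero_iff] at hp
    have hcont : Continuous Φ := continuous_iff_continuousAt.2 fun z => (hΦ z).continuousAt
    obtain ⟨z, hz, hzmax⟩ := (isCompact_closedBall (0 : Z) s).exists_isMaxOn
      ⟨0, by simp [hs.le]⟩ ((hcont.sub p.continuous).continuousOn)
    have hz0 := hzmax (show (0 : Z) ∈ Metric.closedBall 0 s by simp [hs.le])
    simp only [mem_ofPred_eq, Pi.sub_apply, map_zero, sub_zero] at hz0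
    rw [mem_closedBall_zero_iff] at hz
    have hzlt : ‖z‖ < s := by
      refine lt_of_le_of_ne hz fun heq => ?_
      have h1 := hle z
      have h2 := (abs_le.1 (p.le_opNorm z)).1
      rw [heq] at h1 h2
      nlinarith
    have hloc : IsLocalMax (fun y => Φ y - p y) z := by
      filter_upwards [Metric.isOpen_ball.mem_nhds (mem_ball_zero_iff.2 hzlt)] with y hy
      exact hzmax (Metric.ball_subset_closedBall hy)
    have hpz : Φ' z = p :=
      sub_eq_zero.1 (hloc.hasFDerivAt_eq_zero ((hΦ z).sub p.hasFDerivAt))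
    exact ⟨z, ⟨hzlt, by rw [hpz]; exact hloc⟩, hpz⟩
  have hpos : 0 < (μH[(Module.finrank ℝ (Z →L[ℝ] ℝ) : ℝ)] : Measure (Z →L[ℝ] ℝ))
      (Metric.ball (0 : Z →L[ℝ] ℝ) (c * s)) :=
    Metric.measure_ball_pos _ _ (by positivity)
  exact absurd (measure_mono_null hcover himg) hpos.ne'

/-! ### Moreau envelopes of a Legendre-type transform -/

section Envelope

variable {E : Type*} [NormedAddCommGroup E] [InnerProductSpace ℝ E]

/-- The transform `f y = max_x (lam ⟪x, y⟫ + u x - lam / 2 |x|²)` over a closed ball, together with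
a choice `m y` of maximiser. -/
theorem exists_upper_transform [FiniteDimensional ℝ E] {r : ℝ} (lam : ℝ) (hr : 0 < r)
    {u : E → ℝ} (hu : ContinuousOn u (closedBall 0 r)) :
    ∃ (f : E → ℝ) (m : E → E), (∀ y, m y ∈ closedBall (0 : E) r) ∧
      (∀ y, f y = lam * inner ℝ (m y) y + u (m y) - lam / 2 * ‖m y‖ ^ 2) ∧
      (∀ y, ∀ x ∈ closedBall (0 : E) r, lam * inner ℝ x y + u x - lam / 2 * ‖x‖ ^ 2 ≤ f y) := by
  have h : ∀ y : E, ∃ x ∈ closedBall (0 : E) r, ∀ x' ∈ closedBall (0 : E) r,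
      lam * inner ℝ x' y + u x' - lam / 2 * ‖x'‖ ^ 2 ≤
        lam * inner ℝ x y + u x - lam / 2 * ‖x‖ ^ 2 := by
    intro y
    have hc : ContinuousOn (fun x : E => lam * inner ℝ x y + u x - lam / 2 * ‖x‖ ^ 2)
        (closedBall 0 r) := by
      refine ContinuousOn.sub (ContinuousOn.add ?_ hu) ?_ <;> fun_prop
    exact (isCompact_closedBall (0 : E) r).exists_isMaxOn ⟨0, by simp [hr.le]⟩ hc
  choose m hm hmax using h
  exact ⟨fun y => lam * inner ℝ (m y) y + u (m y) - lam / 2 * ‖m y‖ ^ 2, m, hm, fun _ => rfl, hmax⟩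

/-- For a convex Lipschitz `f`, each `ω` has a proximal point: some `v` is a subgradient of `f` at
`ω - mu • v`. That point minimises `f y + |ω - y|² / (2 mu)`. -/
theorem exists_prox [FiniteDimensional ℝ E] {f : E → ℝ} {L mu : ℝ} (hL : 0 ≤ L) (hmu : 0 < mu)
    (hlip : ∀ y y', f y ≤ f y' + L * ‖y - y'‖)
    (hconv : ∀ y y' : E, ∀ t ∈ Icc (0 : ℝ) 1, f (y + t • (y' - y)) ≤ (1 - t) * f y + t * f y')
    (ω : E) :
    ∃ v : E, ∀ y', f (ω - mu • v) + inner ℝ v (y' - (ω - mu • v)) ≤ f y' := by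
  have hfc : Continuous f := by
    refine (LipschitzWith.of_le_add_mul (Real.toNNReal L) fun y y' => ?_).continuous
    rw [Real.coe_toNNReal _ hL, dist_eq_norm]
    exact hlip y y'
  have hR : 0 ≤ 2 * mu * L := by positivity
  obtain ⟨y, hy, hmin⟩ := (isCompact_closedBall ω (2 * mu * L)).exists_isMinOn
    ⟨ω, by simp [hR]⟩
    (show ContinuousOn (fun y : E => f y + ‖ω - y‖ ^ 2 / (2 * mu)) _ by fun_prop)
  have hglob : ∀ y', f y + ‖ω - y‖ ^ 2 / (2 * mu) ≤ f y' + ‖ω - y'‖ ^ 2 / (2 * mu) := by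
    intro y'
    by_cases h : y' ∈ closedBall ω (2 * mu * L)
    · exact hmin h
    · have h1 := hmin (show ω ∈ closedBall ω (2 * mu * L) by simp [hR])
      simp only [mem_ofPred_eq, sub_self, norm_zero] at h1
      have h2 := hlip ω y'
      rw [mem_closedBall, dist_comm, dist_eq_norm, not_le] at h
      have h3 : L * ‖ω - y'‖ ≤ ‖ω - y'‖ ^ 2 / (2 * mu) := by
        rw [le_div_iff₀ (by positivity)]
        nlinarith [norm_nonneg (ω - y')]
      norm_num at h1
      linarith
  refine ⟨(1 / mu) • (ω - y), fun y' => ?_⟩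
  have hy1 : ω - mu • (1 / mu) • (ω - y) = y := by
    rw [smul_smul, mul_one_div_cancel hmu.ne']; simp
  rw [hy1]
  -- minimality along the segment from `y` to `y'`, divided by `t` and with `t → 0`
  have key : ∀ t ∈ Ioc (0 : ℝ) 1,
      f y + inner ℝ ((1 / mu) • (ω - y)) (y' - y) ≤ f y' + t * (‖y' - y‖ ^ 2 / (2 * mu)) := by
    intro t ht
    have h1 := hglob (y + t • (y' - y))
    have h2 := hconv y y' t ⟨ht.1.le, ht.2⟩
    have h3 : ‖ω - (y + t • (y' - y))‖ ^ 2
        = ‖ω - y‖ ^ 2 - 2 * t * inner ℝ (ω - y) (y' - y) + t ^ 2 * ‖y' - y‖ ^ 2 := by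
      rw [← sub_sub, norm_sub_sq_real, inner_smul_right, norm_smul, mul_pow, Real.norm_eq_abs,
        sq_abs]
      ring
    rw [h3] at h1
    rw [inner_smul_left]
    simp only [conj_trivial]
    have h4 : 0 ≤ t * (f y' + t * (‖y' - y‖ ^ 2 / (2 * mu))
        - (f y + 1 / mu * inner ℝ (ω - y) (y' - y))) := by
      have : t * (f y' + t * (‖y' - y‖ ^ 2 / (2 * mu))
        - (f y + 1 / mu * inner ℝ (ω - y) (y' - y))) =
        ((1 - t) * f y + t * f y') + (‖ω - y‖ ^ 2 - 2 * t * inner ℝ (ω - y) (y' - y)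
          + t ^ 2 * ‖y' - y‖ ^ 2) / (2 * mu) - (f y + ‖ω - y‖ ^ 2 / (2 * mu)) := by
        field_simp
        ring
      rw [this]
      linarith
    have := nonneg_of_mul_nonneg_right h4 ht.1
    linarith
  have hlim : Tendsto (fun t : ℝ => f y' + t * (‖y' - y‖ ^ 2 / (2 * mu))) (𝓝[>] 0)
      (𝓝 (f y')) := by
    have : Continuous (fun t : ℝ => f y' + t * (‖y' - y‖ ^ 2 / (2 * mu))) := by fun_prop
    simpa using (this.tendsto 0).mono_left nhdsWithin_le_nhds
  refine ge_of_tendsto hlim ?_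
  filter_upwards [Ioc_mem_nhdsGT (zero_lt_one' ℝ)] with t ht using key t ht

/-- The properties of the `mu`-Moreau envelope `e` of the transform
`f ω = max_x (lam ⟪x, ω⟫ + u x - lam / 2 |x|²)` over `closedBall 0 r`, with `v` its gradient.
The gradient is `1 / mu`-Lipschitz; `lower` is the convexity of `e` and `upper` its semiconcavity;
`young` compares `u` with `e` and is the Young inequality for the transform composed with the
envelope; `attain` expresses `e ≤ f`; `contact` says that equality holds in `young` at
`x = v ω / lam` wherever the second-order growth of `e` is less than `1 / mu`. -/
structure Envelope (u : E → ℝ) (r lam mu : ℝ) (e : E → ℝ) (v : E → E) : Prop where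
  lip : LipschitzWith (Real.toNNReal (1 / mu)) v
  lower : ∀ ω ω', e ω + inner ℝ (v ω) (ω' - ω) ≤ e ω'
  upper : ∀ ω ω', e ω' ≤ e ω + inner ℝ (v ω) (ω' - ω) + 1 / (2 * mu) * ‖ω' - ω‖ ^ 2
  young : ∀ x ∈ closedBall (0 : E) r, ∀ ω, u x ≤
    (lam + lam ^ 2 * mu) / 2 * ‖x‖ ^ 2 - lam * inner ℝ x ω + e ω
  attain : ∀ ω, ∃ x ∈ closedBall (0 : E) r,
    e ω ≤ lam * inner ℝ x ω + u x - lam / 2 * ‖x‖ ^ 2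
  contact : ∀ ω x, v ω = lam • x → ∀ c < 1 / mu,
    (∀ᶠ k in 𝓝 (0 : E), e (ω + k) ≤ e ω + inner ℝ (v ω) k + c / 2 * ‖k‖ ^ 2) →
    u x = (lam + lam ^ 2 * mu) / 2 * ‖x‖ ^ 2 - lam * inner ℝ x ω + e ω

/-- The envelope data exist for every function continuous on the ball. The contact property holds
because a maximiser `x'` in the transform with `lam • x' ≠ v ω` would give `f` two distinct
subgradients at the proximal point, and `e` would then have second derivative `1 / mu` in the
direction of their difference. -/
theorem exists_envelope [FiniteDimensional ℝ E] {r lam mu : ℝ} (hr : 0 < r) (hlam : 0 < lam)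
    (hmu : 0 < mu) {u : E → ℝ} (hu : ContinuousOn u (closedBall 0 r)) :
    ∃ e v, Envelope u r lam mu e v := by
  obtain ⟨f, m, hm, hfm, hf⟩ := exists_upper_transform lam hr hu
  have hlip : ∀ y y', f y ≤ f y' + lam * r * ‖y - y'‖ := by
    intro y y'
    have h1 := hf y' (m y) (hm y)
    rw [hfm y]
    have h2 : inner ℝ (m y) (y - y') ≤ r * ‖y - y'‖ :=
      (real_inner_le_norm _ _).trans (by
        have := mem_closedBall_zero_iff.1 (hm y)
        gcongr)
    rw [inner_sub_right] at h2
    nlinarith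
  have hconv : ∀ y y' : E, ∀ t ∈ Icc (0 : ℝ) 1,
      f (y + t • (y' - y)) ≤ (1 - t) * f y + t * f y' := by
    intro y y' t ht
    have h1 := hf y _ (hm (y + t • (y' - y)))
    have h2 := hf y' _ (hm (y + t • (y' - y)))
    rw [hfm (y + t • (y' - y)), inner_add_right, inner_smul_right, inner_sub_right]
    have h3 := mul_le_mul_of_nonneg_left h1 (sub_nonneg.2 ht.2)
    have h4 := mul_le_mul_of_nonneg_left h2 ht.1
    linarith
  choose v hv using exists_prox (by positivity) hmu hlip hconv
  -- the Moreau envelope, evaluated at its minimiser `ω - mu • v ω`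
  let e : E → ℝ := fun ω => f (ω - mu • v ω) + mu / 2 * ‖v ω‖ ^ 2
  -- subgradients of `f` bound the envelope from below
  have hsubg : ∀ y w : E, (∀ y', f y + inner ℝ w (y' - y) ≤ f y') → ∀ ω,
      f y + inner ℝ w (ω - y) - mu / 2 * ‖w‖ ^ 2 ≤ e ω := by
    intro y w hw ω
    have h1 := hw (ω - mu • v ω)
    have h2 : 0 ≤ ‖w - v ω‖ ^ 2 := by positivity
    rw [norm_sub_sq_real] at h2
    have h3 : inner ℝ w (ω - mu • v ω - y) = inner ℝ w (ω - y) - mu * inner ℝ w (v ω) := by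
      rw [sub_right_comm, inner_sub_right, inner_smul_right]
    rw [h3] at h1
    simp only [e]
    nlinarith
  have hle : ∀ ω y, e ω ≤ f y + 1 / (2 * mu) * ‖ω - y‖ ^ 2 := by
    intro ω y
    have h1 := hv ω y
    have h2 : 0 ≤ ‖(ω - y) - mu • v ω‖ ^ 2 := by positivity
    rw [norm_sub_sq_real, inner_smul_right, norm_smul, mul_pow, Real.norm_eq_abs, sq_abs,
      real_inner_comm] at h2
    have h3 : y - (ω - mu • v ω) = -(ω - y) + mu • v ω := by abel
    rw [h3, inner_add_right, inner_neg_right, inner_smul_right, real_inner_self_eq_norm_sq] at h1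
    simp only [e]
    have h4 : 1 / (2 * mu) * ‖ω - y‖ ^ 2 - inner ℝ (v ω) (ω - y) + mu / 2 * ‖v ω‖ ^ 2 =
      1 / (2 * mu) * (‖ω - y‖ ^ 2 - 2 * (mu * inner ℝ (v ω) (ω - y)) + mu ^ 2 * ‖v ω‖ ^ 2) := by
      field_simp
    have h5 : 0 ≤ 1 / (2 * mu) * (‖ω - y‖ ^ 2 - 2 * (mu * inner ℝ (v ω) (ω - y))
        + mu ^ 2 * ‖v ω‖ ^ 2) := by positivity
    linarith
  have lower : ∀ ω ω', e ω + inner ℝ (v ω) (ω' - ω) ≤ e ω' := by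
    intro ω ω'
    have h1 := hsubg _ _ (hv ω) ω'
    have h2 : ω' - (ω - mu • v ω) = (ω' - ω) + mu • v ω := by abel
    rw [h2, inner_add_right, inner_smul_right, real_inner_self_eq_norm_sq] at h1
    refine le_trans (le_of_eq ?_) h1
    simp only [e]
    ring
  refine ⟨e, v, ?_, lower, ?_, ?_, ?_, ?_⟩
  · refine LipschitzWith.of_dist_le_mul fun ω ω' => ?_
    rw [Real.coe_toNNReal _ (by positivity), dist_eq_norm, dist_eq_norm]
    have h1 := hv ω (ω' - mu • v ω')
    have h2 := hv ω' (ω - mu • v ω)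
    have h3 : (ω' - mu • v ω') - (ω - mu • v ω) = mu • (v ω - v ω') - (ω - ω') := by
      rw [smul_sub]; abel
    have h4 : (ω - mu • v ω) - (ω' - mu • v ω') = (ω - ω') - mu • (v ω - v ω') := by
      rw [smul_sub]; abel
    rw [h3, inner_sub_right, inner_smul_right] at h1
    rw [h4, inner_sub_right, inner_smul_right] at h2
    have h5 : mu * ‖v ω - v ω'‖ ^ 2 ≤ inner ℝ (v ω - v ω') (ω - ω') := by
      rw [← real_inner_self_eq_norm_sq, inner_sub_left, inner_sub_left]
      linarith
    have h6 := h5.trans (real_inner_le_norm _ _)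
    have h7 : mu * ‖v ω - v ω'‖ ≤ ‖ω - ω'‖ := by
      by_contra! h
      nlinarith [norm_nonneg (v ω - v ω'), norm_nonneg (ω - ω')]
    rw [one_div, ← div_eq_inv_mul, le_div_iff₀ hmu]
    linarith
  · intro ω ω'
    have h1 := hle ω' (ω - mu • v ω)
    have h2 : ω' - (ω - mu • v ω) = (ω' - ω) + mu • v ω := by abel
    rw [h2, norm_add_sq_real, inner_smul_right, norm_smul, mul_pow, Real.norm_eq_abs, sq_abs,
      real_inner_comm] at h1
    refine h1.trans (le_of_eq ?_)
    simp only [e]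
    field_simp
    ring
  · intro x hx ω
    have h1 := hf (ω - mu • v ω) x hx
    rw [inner_sub_right, inner_smul_right] at h1
    have h2 : 0 ≤ mu / 2 * ‖lam • x - v ω‖ ^ 2 := by positivity
    rw [norm_sub_sq_real, inner_smul_left, norm_smul, mul_pow, Real.norm_eq_abs, sq_abs] at h2
    simp only [conj_trivial] at h2
    simp only [e]
    linarith
  · intro ω
    refine ⟨m ω, hm ω, ?_⟩
    rw [← hfm ω]
    simpa using hle ω ω
  · intro ω x hx c hc hev
    -- `w` is the slope of an affine piece of `f` active at the minimiser `y`
    set y := ω - mu • v ω with hy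
    set w := lam • m y with hw
    have hws : ∀ y', f y + inner ℝ w (y' - y) ≤ f y' := by
      intro y'
      have h1 := hf y' (m y) (hm y)
      have h2 : inner ℝ w (y' - y) = lam * (inner ℝ (m y) y' - inner ℝ (m y) y) := by
        rw [hw, real_inner_smul_left, ← inner_sub_right]
      rw [hfm y, h2]
      linarith
    -- the subgradients between `v ω` and `w` make `e` grow like `‖k‖ ^ 2 / (2 * mu)`
    have hgrow : ∀ t ∈ Icc (0 : ℝ) 1, e ω + inner ℝ (v ω) ((t * mu) • (w - v ω))
        + 1 / (2 * mu) * ‖(t * mu) • (w - v ω)‖ ^ 2 ≤ e (ω + (t * mu) • (w - v ω)) := by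
      intro t ht
      have h1 := hsubg y (v ω + t • (w - v ω)) (fun y' => by
        have h2 := mul_le_mul_of_nonneg_left (hws y') ht.1
        have h3 := mul_le_mul_of_nonneg_left (hv ω y') (sub_nonneg.2 ht.2)
        rw [← hy] at h3
        rw [inner_add_left, inner_smul_left, inner_sub_left]
        simp only [conj_trivial]
        linarith) (ω + (t * mu) • (w - v ω))
      have h4 : ω + (t * mu) • (w - v ω) - y = mu • (v ω + t • (w - v ω)) := by
        rw [hy, smul_add, smul_smul, mul_comm t mu]; abel
      rw [h4, inner_smul_right, real_inner_self_eq_norm_sq, norm_add_sq_real, inner_smul_right,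
        norm_smul, mul_pow, Real.norm_eq_abs, sq_abs] at h1
      rw [inner_smul_right, norm_smul, mul_pow, Real.norm_eq_abs, sq_abs]
      refine le_trans (le_of_eq ?_) h1
      simp only [e, ← hy]
      field_simp
      ring
    have htend : Tendsto (fun t : ℝ => (t * mu) • (w - v ω)) (𝓝[>] 0) (𝓝 0) := by
      have : Continuous (fun t : ℝ => (t * mu) • (w - v ω)) := by fun_prop
      simpa using (this.tendsto 0).mono_left nhdsWithin_le_nhds
    obtain ⟨t, h1, ht⟩ := ((htend.eventually hev).and
      (Ioc_mem_nhdsGT (zero_lt_one' ℝ))).exists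
    have h2 := hgrow t ⟨ht.1.le, ht.2⟩
    have h3 : (1 / mu - c) / 2 * ‖(t * mu) • (w - v ω)‖ ^ 2 ≤ 0 := by
      have : 1 / (2 * mu) = 1 / mu / 2 := by field_simp
      rw [this] at h2
      linarith
    have h4 : w = v ω := by
      by_contra hne
      have h5 : 0 < ‖(t * mu) • (w - v ω)‖ :=
        norm_pos_iff.2 (smul_ne_zero (mul_pos ht.1 hmu).ne' (sub_ne_zero.2 hne))
      have h6 : 0 < (1 / mu - c) / 2 := by linarith
      have : 0 < (1 / mu - c) / 2 * ‖(t * mu) • (w - v ω)‖ ^ 2 := by positivity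
      linarith
    have h5 : m y = x := by
      have : lam • m y = lam • x := by rw [← hw, h4, hx]
      exact smul_right_injective E hlam.ne' this
    have h6 := hfm y
    rw [h5, hy, hx, inner_sub_right, inner_smul_right, inner_smul_right,
      real_inner_self_eq_norm_sq] at h6
    simp only [e]
    rw [hx, h6, norm_smul, mul_pow, Real.norm_eq_abs, sq_abs]
    ring

end Envelope

/-! ### Approximate second-order jets for a sum -/

section Sums

theorem bilin_bound {Z : Type*} [NormedAddCommGroup Z] [NormedSpace ℝ Z]
    (b : Z →L[ℝ] Z →L[ℝ] ℝ) : ∃ C : ℝ, 0 ≤ C ∧ ∀ k, b k k ≤ C * ‖k‖ ^ 2 := by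
  refine ⟨‖b‖, b.opNorm_nonneg, fun k => ?_⟩
  have := (le_abs_self _).trans (b.le_opNorm₂ k k)
  linarith

theorem bilin_lipschitz {Z : Type*} [NormedAddCommGroup Z] [NormedSpace ℝ Z]
    (b : Z →L[ℝ] Z →L[ℝ] ℝ) : ∃ K, LipschitzWith K b := ⟨_, b.lipschitz⟩

variable {E : Type*} [NormedAddCommGroup E] [InnerProductSpace ℝ E]

theorem Envelope.hasFDerivAt {u : E → ℝ} {r lam mu : ℝ} {e : E → ℝ} {v : E → E}
    (H : Envelope u r lam mu e v) (ω : E) : HasFDerivAt e (innerSL ℝ (v ω)) ω := by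
  rw [hasFDerivAt_iff_isLittleO_nhds_zero]
  refine Asymptotics.IsBigO.trans_isLittleO (g := fun k : E => ‖k‖ ^ 2) ?_ ?_
  · refine Asymptotics.IsBigO.of_bound (1 / (2 * mu)) (Eventually.of_forall fun k => ?_)
    have h1 := H.lower ω (ω + k)
    have h2 := H.upper ω (ω + k)
    rw [add_sub_cancel_left] at h1 h2
    simp only [innerSL_apply_apply, Real.norm_eq_abs]
    rw [abs_of_nonneg (by linarith), abs_of_nonneg (by positivity)]
    linarith
  · exact Asymptotics.isLittleO_norm_pow_id one_lt_two

/-- The Hessian of the convex function `e` is nonnegative wherever it exists. -/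
theorem Envelope.deriv_nonneg {u : E → ℝ} {r lam mu : ℝ} {e : E → ℝ} {v : E → E}
    (H : Envelope u r lam mu e v) {ω : E} {D : E →L[ℝ] E} (hD : HasFDerivAt v D ω) (k : E) :
    0 ≤ inner ℝ (D k) k := by
  have h1 : HasFDerivAt (fun y => -innerSL ℝ (v y)) (-((innerSL ℝ).comp D)) ω :=
    ((innerSL ℝ (E := E)).hasFDerivAt.comp ω hD).neg
  have h2 := second_order_max (f := fun y => -e y)
    (Eventually.of_forall fun y => (H.hasFDerivAt y).neg) h1 (by
      refine Eventually.of_forall fun y => ?_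
      have := H.lower ω y
      rw [inner_sub_right] at this
      simp only [neg_apply, innerSL_apply_apply]
      linarith) k
  simp only [neg_apply, ContinuousLinearMap.comp_apply, innerSL_apply_apply] at h2
  linarith

/-- Second-order information passes from `e` at `ω` to `u` at `x = v ω / lam`: the Hessian of `e`
shifted by `lam² mu - lam` bounds `u` from above to second order. -/
theorem Envelope.jet {u : E → ℝ} {r lam mu : ℝ} {e : E → ℝ} {v : E → E}
    (H : Envelope u r lam mu e v) {ω x : E} {D : E →L[ℝ] E}
    (hD : HasFDerivAt v D ω) {c : ℝ} (hc : ∀ k, inner ℝ (D k) k ≤ c * ‖k‖ ^ 2)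
    (hcmu : c + 1 < 1 / mu) (hx : v ω = lam • x) (hxr : ‖x‖ < r) {τ : ℝ} (hτ : 0 < τ) :
    ∀ᶠ h in 𝓝 (0 : E), u (x + h) ≤ u x + inner ℝ ((lam + lam ^ 2 * mu) • x - lam • ω) h
      + 1 / 2 * (inner ℝ (D h) h + (lam ^ 2 * mu - lam) * ‖h‖ ^ 2) + τ * ‖h‖ ^ 2 := by
  have h1 : HasFDerivAt (fun y => innerSL ℝ (v y)) ((innerSL ℝ).comp D) ω :=
    (innerSL ℝ (E := E)).hasFDerivAt.comp ω hD
  have htay : ∀ η > 0, ∀ᶠ k in 𝓝 (0 : E),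
      e (ω + k) ≤ e ω + inner ℝ (v ω) k + 1 / 2 * inner ℝ (D k) k + η * ‖k‖ ^ 2 := by
    intro η hη
    filter_upwards [taylor_two (Eventually.of_forall H.hasFDerivAt) h1 hη] with k hk
    have := (abs_le.1 hk).2
    simp only [ContinuousLinearMap.comp_apply, innerSL_apply_apply] at this
    linarith
  have hcontact := H.contact ω x hx (c + 1) hcmu (by
    filter_upwards [htay (1 / 2) (by norm_num)] with k hk
    have := hc k
    linarith)
  have hin : ∀ᶠ h in 𝓝 (0 : E), x + h ∈ closedBall (0 : E) r := by
    have hcont : Continuous (fun h : E => x + h) := by fun_prop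
    have : Tendsto (fun h : E => x + h) (𝓝 0) (𝓝 x) := by simpa using hcont.tendsto 0
    filter_upwards [this.eventually (isOpen_ball.mem_nhds (mem_ball_zero_iff.2 hxr))] with h hh
    exact ball_subset_closedBall hh
  filter_upwards [htay τ hτ, hin] with h hh hr
  -- the Young inequality with the base point shifted by the same increment `h`
  have h2 := H.young (x + h) hr (ω + h)
  rw [hx, real_inner_smul_left] at hh
  rw [norm_add_sq_real, inner_add_left, inner_add_right, inner_add_right,
    real_inner_self_eq_norm_sq, real_inner_comm ω h] at h2
  rw [inner_sub_left, real_inner_smul_left, real_inner_smul_left, hcontact]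
  linarith

/-- With `F` and `S` standing for the projections of `Z = E × E`, the Hessian of
`e₁ (F z) + e₂ (S z)` is block diagonal. -/
theorem quadratic_components {Z : Type*} [NormedAddCommGroup Z] [NormedSpace ℝ Z]
    (F S : Z →L[ℝ] E) {i₁ i₂ : E →L[ℝ] Z →L[ℝ] ℝ} (hi₁ : ∀ w k, i₁ w k = inner ℝ w (F k))
    (hi₂ : ∀ w k, i₂ w k = inner ℝ w (S k)) {v₁ v₂ : E → E} {z : Z} {W : Z →L[ℝ] Z →L[ℝ] ℝ}
    {D₁ D₂ : E →L[ℝ] E} (hD₁ : HasFDerivAt v₁ D₁ (F z)) (hD₂ : HasFDerivAt v₂ D₂ (S z))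
    (hW : HasFDerivAt (fun z => i₁ (v₁ (F z)) + i₂ (v₂ (S z))) W z) (k : Z) :
    W k k = inner ℝ (D₁ (F k)) (F k) + inner ℝ (D₂ (S k)) (S k) := by
  have hF : HasFDerivAt (fun z => i₁ (v₁ (F z))) (i₁.comp (D₁.comp F)) z :=
    i₁.hasFDerivAt.comp z (hD₁.comp z F.hasFDerivAt)
  have hS : HasFDerivAt (fun z => i₂ (v₂ (S z))) (i₂.comp (D₂.comp S)) z :=
    i₂.hasFDerivAt.comp z (hD₂.comp z S.hasFDerivAt)
  rw [hW.unique (hF.add hS)]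
  simp [hi₁, hi₂]

variable [FiniteDimensional ℝ E]

/-- With `F`, `S` standing for the projections of `Z = E × E` and `J` for an inclusion: if the
derivative of `e₁ (F z) + e₂ (S z)` is differentiable at `z`, then so is the gradient `v₁` at
`F z`. The Riesz isomorphism is inverted by the map `R`. -/
theorem differentiable_component {Z : Type*} [NormedAddCommGroup Z] [NormedSpace ℝ Z]
    (F S : Z →L[ℝ] E) (J : E →L[ℝ] Z) (hFJ : ∀ k, F (J k) = k) (hSJ : ∀ k, S (J k) = 0)
    {i₁ i₂ : E →L[ℝ] Z →L[ℝ] ℝ} (hi₁ : ∀ w k, i₁ w k = inner ℝ w (F k))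
    (hi₂ : ∀ w k, i₂ w k = inner ℝ w (S k)) {v₁ v₂ : E → E} {z : Z} {W : Z →L[ℝ] Z →L[ℝ] ℝ}
    (hW : HasFDerivAt (fun z => i₁ (v₁ (F z)) + i₂ (v₂ (S z))) W z) :
    ∃ D : E →L[ℝ] E, HasFDerivAt v₁ D (F z) := by
  obtain ⟨R, hR⟩ : ∃ R : (E →L[ℝ] ℝ) →L[ℝ] E, ∀ w, R (innerSL ℝ w) = w := by
    obtain ⟨g, hg⟩ := LinearMap.exists_leftInverse_of_injective
      ({ toFun := fun w => innerSL ℝ w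
         map_add' := fun w w' => by simp
         map_smul' := fun t w => by simp } : E →ₗ[ℝ] E →L[ℝ] ℝ) (by
        rw [LinearMap.ker_eq_bot]
        intro w w' hww
        refine ext_inner_right ℝ fun k => ?_
        exact DFunLike.congr_fun hww k)
    exact ⟨LinearMap.toContinuousLinearMap g, fun w => DFunLike.congr_fun hg w⟩
  have hz : z + J (F z - F z) = z := by simp
  have hin : HasFDerivAt (fun ω : E => z + J (ω - F z)) J (F z) := by
    have := (J.hasFDerivAt.comp (F z) ((hasFDerivAt_id (F z)).sub_const (F z))).const_add z
    exact this.congr_fderiv (by ext; rfl)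
  have h3 := HasFDerivAt.comp (F z) (f := fun ω : E => z + J (ω - F z))
    (g := fun z => i₁ (v₁ (F z)) + i₂ (v₂ (S z))) (g' := W) (by rw [hz]; exact hW) hin
  have h4 := ((R.comp ((ContinuousLinearMap.compL ℝ E Z ℝ).flip J)).hasFDerivAt).comp (F z) h3
  refine ⟨_, h4.congr_of_eventuallyEq (Eventually.of_forall fun ω => ?_)⟩
  have : (i₁ (v₁ ω) + i₂ (v₂ (S z))).comp J = innerSL ℝ (v₁ ω) := by
    ext k
    simp [hi₁, hi₂, hFJ, hSJ]
  simp only [Function.comp_apply, ContinuousLinearMap.comp_apply,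
    ContinuousLinearMap.flip_apply, ContinuousLinearMap.compL_apply, map_add, hFJ, hSJ,
    add_zero, add_sub_cancel]
  rw [← map_add, ← ContinuousLinearMap.add_comp, this, hR]

/-- The theorem on sums at the origin, in approximate form and for two arbitrary continuous
functions. The hypothesis `hb` says that the sup-convolution of `u₁ x + u₂ y` is at most the
quadratic function `b(ω, ω) / 2`, with equality at the origin by `h₁` and `h₂`. -/
theorem exists_approx_jets {r lam : ℝ} (hr : 0 < r) (hlam : 0 < lam) {u₁ u₂ : E → ℝ}
    (hu₁ : ContinuousOn u₁ (closedBall 0 r)) (hu₂ : ContinuousOn u₂ (closedBall 0 r))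
    (h₁ : u₁ 0 = 0) (h₂ : u₂ 0 = 0) (b : (E × E) →L[ℝ] (E × E) →L[ℝ] ℝ)
    (hb : ∀ x ∈ closedBall (0 : E) r, ∀ y ∈ closedBall (0 : E) r, ∀ ω : E × E,
      u₁ x + u₂ y ≤ 1 / 2 * b ω ω + lam / 2 * (‖x - ω.1‖ ^ 2 + ‖y - ω.2‖ ^ 2))
    {τ : ℝ} (hτ : 0 < τ) :
    ∃ x₁ x₂ p₁ p₂ : E, ‖x₁‖ < τ ∧ ‖x₂‖ < τ ∧ ‖p₁‖ < τ ∧ ‖p₂‖ < τ ∧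
      ∃ N₁ N₂ : E →L[ℝ] E →L[ℝ] ℝ,
        (∀ k, -(lam * ‖k‖ ^ 2) ≤ N₁ k k) ∧ (∀ k, -(lam * ‖k‖ ^ 2) ≤ N₂ k k) ∧
        (∀ k : E × E, N₁ k.1 k.1 + N₂ k.2 k.2 ≤ b k k + τ * (‖k.1‖ ^ 2 + ‖k.2‖ ^ 2)) ∧
        (∀ᶠ h in 𝓝 (0 : E),
          u₁ (x₁ + h) ≤ u₁ x₁ + inner ℝ p₁ h + 1 / 2 * N₁ h h + τ * ‖h‖ ^ 2) ∧
        (∀ᶠ h in 𝓝 (0 : E),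
          u₂ (x₂ + h) ≤ u₂ x₂ + inner ℝ p₂ h + 1 / 2 * N₂ h h + τ * ‖h‖ ^ 2) := by
  set κ := τ / 2 with hκ
  have hκpos : 0 < κ := by positivity
  obtain ⟨C, hC, hbb⟩ := bilin_bound (Z := E × E) b
  set c := C + lam + κ with hcdef
  have hcpos : 0 < c := by positivity
  -- `mu` is small enough for contact (`c + 1 < 1 / mu`) and for `lam ^ 2 * mu ≤ τ / 2`
  obtain ⟨mu, hmu, hcmu, hmuτ⟩ : ∃ mu : ℝ, 0 < mu ∧ c + 1 < 1 / mu ∧ lam ^ 2 * mu ≤ τ / 2 := by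
    have hpos : 0 < c + 2 + 2 * lam ^ 2 / τ := by positivity
    refine ⟨1 / (c + 2 + 2 * lam ^ 2 / τ), by positivity, ?_, ?_⟩
    · rw [one_div_one_div]
      have : 0 < 2 * lam ^ 2 / τ := by positivity
      linarith
    · rw [mul_one_div, div_le_iff₀ hpos]
      have : τ / 2 * (c + 2 + 2 * lam ^ 2 / τ) = τ / 2 * (c + 2) + lam ^ 2 := by field_simp
      rw [this]
      have : 0 < τ / 2 * (c + 2) := by positivity
      linarith
  obtain ⟨e₁, v₁, H₁⟩ := exists_envelope hr hlam hmu hu₁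
  obtain ⟨e₂, v₂, H₂⟩ := exists_envelope hr hlam hmu hu₂
  let F : (E × E) →L[ℝ] E := ContinuousLinearMap.fst ℝ E E
  let S : (E × E) →L[ℝ] E := ContinuousLinearMap.snd ℝ E E
  let i₁ : E →L[ℝ] (E × E) →L[ℝ] ℝ :=
    ((ContinuousLinearMap.compL ℝ (E × E) E ℝ).flip F).comp (innerSL ℝ)
  let i₂ : E →L[ℝ] (E × E) →L[ℝ] ℝ :=
    ((ContinuousLinearMap.compL ℝ (E × E) E ℝ).flip S).comp (innerSL ℝ)
  have hi₁ : ∀ w k, i₁ w k = inner ℝ w k.1 := fun w k => by simp [i₁, F]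
  have hi₂ : ∀ w k, i₂ w k = inner ℝ w k.2 := fun w k => by simp [i₂, S]
  let L : (E × E) →L[ℝ] (E × E) →L[ℝ] ℝ :=
    (1 / 2 : ℝ) • (b + b.flip) + (lam + κ) • (i₁.comp F + i₂.comp S)
  have hL : ∀ z k, L z k = 1 / 2 * (b z k + b k z)
      + (lam + κ) * (inner ℝ z.1 k.1 + inner ℝ z.2 k.2) := by
    intro z k
    simp [L, hi₁, hi₂, F, S]
    ring
  have hLz : ∀ z, HasFDerivAt (fun z => 1 / 2 * L z z) (L z) z := by
    intro z
    have h := ((L.hasFDerivAt (x := z)).clm_apply (hasFDerivAt_id z)).const_mul (1 / 2 : ℝ)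
    refine h.congr_fderiv ?_
    ext k
    all_goals
      simp [hL, real_inner_comm]
      try ring
  -- `κ` in `L` makes the maximum of `Φ` at the origin strict
  let Φ : E × E → ℝ := fun z => e₁ z.1 + e₂ z.2 - 1 / 2 * L z z
  let Φ' : E × E → (E × E) →L[ℝ] ℝ := fun z => i₁ (v₁ z.1) + i₂ (v₂ z.2) - L z
  have hΦ : ∀ z, HasFDerivAt Φ (Φ' z) z := by
    intro z
    have ha : HasFDerivAt (fun z : E × E => e₁ z.1) (i₁ (v₁ z.1)) z :=
      (H₁.hasFDerivAt z.1).comp z F.hasFDerivAt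
    have hb : HasFDerivAt (fun z : E × E => e₂ z.2) (i₂ (v₂ z.2)) z :=
      (H₂.hasFDerivAt z.2).comp z S.hasFDerivAt
    exact (ha.add hb).sub (hLz z)
  obtain ⟨K, hK⟩ := bilin_lipschitz (Z := E × E) L
  have hlip := ((i₁.lipschitz.comp (H₁.lip.comp LipschitzWith.prod_fst)).add
    (i₂.lipschitz.comp (H₂.lip.comp LipschitzWith.prod_snd))).sub hK
  have hΦle' : ∀ z : E × E, Φ z ≤ -(κ / 2 * (‖z.1‖ ^ 2 + ‖z.2‖ ^ 2)) := by
    intro z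
    obtain ⟨x, hx, hxe⟩ := H₁.attain z.1
    obtain ⟨y, hy, hye⟩ := H₂.attain z.2
    have h3 := hb x hx y hy z
    rw [norm_sub_sq_real, norm_sub_sq_real] at h3
    simp only [Φ, hL, real_inner_self_eq_norm_sq]
    linarith
  have hΦle : ∀ z, Φ z ≤ -(κ / 2 * ‖z‖ ^ 2) := by
    intro z
    refine (hΦle' z).trans ?_
    rw [neg_le_neg_iff]
    refine mul_le_mul_of_nonneg_left ?_ (by positivity)
    rw [Prod.norm_def]
    rcases max_choice ‖z.1‖ ‖z.2‖ with h | h <;> rw [h] <;>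
      nlinarith [sq_nonneg ‖z.1‖, sq_nonneg ‖z.2‖]
  have hΦ0 : 0 ≤ Φ 0 := by
    have h3 := H₁.young 0 (by simp [hr.le]) 0
    have h4 := H₂.young 0 (by simp [hr.le]) 0
    simp only [h₁, h₂, norm_zero, inner_zero_left] at h3 h4
    simp only [Φ, Prod.fst_zero, Prod.snd_zero, map_zero]
    norm_num at h3 h4 ⊢
    linarith
  have hv0 : v₁ 0 = 0 ∧ v₂ 0 = 0 := by
    have hmax : IsLocalMax Φ 0 := Eventually.of_forall fun z =>
      ((hΦle z).trans (neg_nonpos.2 (by positivity))).trans hΦ0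
    have h0 := hmax.hasFDerivAt_eq_zero (hΦ 0)
    have h3 := DFunLike.congr_fun h0 (v₁ 0, 0)
    have h4 := DFunLike.congr_fun h0 (0, v₂ 0)
    simp [Φ', hi₁, hi₂] at h3 h4
    exact ⟨h3, h4⟩
  -- the radius that makes the base points and slopes smaller than `τ` and `r`
  set a := 1 / mu with ha
  have hapos : 0 < a := by positivity
  set den := 1 + a / lam + ((lam + lam ^ 2 * mu) * (a / lam) + lam) with hden
  have hdenpos : 0 < den := by positivity
  have hspos : 0 < min τ r / den := div_pos (lt_min hτ hr) hdenpos
  obtain ⟨z, hz, Φ'', hΦ'', hneg⟩ := jensen hΦ hlip (half_pos hκpos) hΦ0 hΦle hspos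
  have hW : HasFDerivAt (fun z : E × E => i₁ (v₁ z.1) + i₂ (v₂ z.2)) (Φ'' + L) z := by
    refine (hΦ''.add L.hasFDerivAt).congr_of_eventuallyEq (Eventually.of_forall fun z => ?_)
    simp [Φ']
  obtain ⟨D₁, hD₁⟩ : ∃ D : E →L[ℝ] E, HasFDerivAt v₁ D z.1 :=
    differentiable_component F S (ContinuousLinearMap.inl ℝ E E) (fun _ => rfl) (fun _ => rfl)
      hi₁ hi₂ hW
  obtain ⟨D₂, hD₂⟩ : ∃ D : E →L[ℝ] E, HasFDerivAt v₂ D z.2 := by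
    refine differentiable_component (v₂ := v₁) S F (ContinuousLinearMap.inr ℝ E E) (fun _ => rfl)
      (fun _ => rfl) hi₂ hi₁ (hW.congr_of_eventuallyEq (Eventually.of_forall fun z => ?_))
    exact add_comm _ _
  have hquad : ∀ k : E × E, inner ℝ (D₁ k.1) k.1 + inner ℝ (D₂ k.2) k.2
      ≤ b k k + (lam + κ) * (‖k.1‖ ^ 2 + ‖k.2‖ ^ 2) := by
    intro k
    have h4 := quadratic_components F S hi₁ hi₂ hD₁ hD₂ hW k
    have h5 := hneg k
    simp only [add_apply, hL, real_inner_self_eq_norm_sq, F, S, ContinuousLinearMap.coe_fst',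
      ContinuousLinearMap.coe_snd'] at h4
    linarith
  have hc₁ : ∀ k, inner ℝ (D₁ k) k ≤ c * ‖k‖ ^ 2 := by
    intro k
    have h3 := hquad (k, 0)
    have h4 := hbb (k, 0)
    simp [Prod.norm_def] at h3 h4
    rw [hcdef]
    linarith
  have hc₂ : ∀ k, inner ℝ (D₂ k) k ≤ c * ‖k‖ ^ 2 := by
    intro k
    have h3 := hquad (0, k)
    have h4 := hbb (0, k)
    simp [Prod.norm_def] at h3 h4
    rw [hcdef]
    linarith
  have hsmall : ∀ (v : E → E) (ω : E), LipschitzWith (Real.toNNReal (1 / mu)) v → v 0 = 0 →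
      ‖ω‖ < min τ r / den → ‖(1 / lam) • v ω‖ < τ ∧ ‖(1 / lam) • v ω‖ < r ∧
        ‖(lam + lam ^ 2 * mu) • (1 / lam) • v ω - lam • ω‖ < τ := by
    intro v ω hv hv0 hω
    have h3 := hv.dist_le_mul ω 0
    rw [hv0, dist_zero_right, dist_zero_right, Real.coe_toNNReal _ hapos.le] at h3
    have h4 : ‖(1 / lam) • v ω‖ ≤ a / lam * ‖ω‖ := by
      rw [norm_smul, Real.norm_eq_abs, abs_of_pos (by positivity)]
      calc _ ≤ 1 / lam * (a * ‖ω‖) := by gcongr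
        _ = _ := by ring
    have h5 : ‖(lam + lam ^ 2 * mu) • (1 / lam) • v ω - lam • ω‖
        ≤ ((lam + lam ^ 2 * mu) * (a / lam) + lam) * ‖ω‖ := by
      refine (norm_sub_le _ _).trans ?_
      rw [norm_smul, norm_smul lam, Real.norm_eq_abs, Real.norm_eq_abs, abs_of_pos hlam,
        abs_of_pos (by positivity)]
      have : (lam + lam ^ 2 * mu) * ‖(1 / lam) • v ω‖
          ≤ (lam + lam ^ 2 * mu) * (a / lam * ‖ω‖) := by gcongr
      linarith
    rw [lt_div_iff₀ hdenpos] at hω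
    have h6 : 0 ≤ a / lam * ‖ω‖ := by positivity
    have h7 : 0 ≤ ((lam + lam ^ 2 * mu) * (a / lam) + lam) * ‖ω‖ := by positivity
    have h8 : ‖ω‖ * den = ‖ω‖ + a / lam * ‖ω‖
        + ((lam + lam ^ 2 * mu) * (a / lam) + lam) * ‖ω‖ := by rw [hden]; ring
    have h9 := norm_nonneg ω
    have h10 := min_le_left τ r
    have h11 := min_le_right τ r
    exact ⟨by linarith, by linarith, by linarith⟩
  obtain ⟨hx₁τ, hx₁r, hp₁⟩ := hsmall v₁ z.1 H₁.lip hv0.1 ((norm_fst_le z).trans_lt hz)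
  obtain ⟨hx₂τ, hx₂r, hp₂⟩ := hsmall v₂ z.2 H₂.lip hv0.2 ((norm_snd_le z).trans_lt hz)
  let N : (E →L[ℝ] E) → E →L[ℝ] E →L[ℝ] ℝ :=
    fun D => (innerSL ℝ).comp D + (lam ^ 2 * mu - lam) • (innerSL ℝ)
  have hN : ∀ (D : E →L[ℝ] E) (h : E),
      N D h h = inner ℝ (D h) h + (lam ^ 2 * mu - lam) * ‖h‖ ^ 2 := by
    intro D h
    rw [← real_inner_self_eq_norm_sq]
    rfl
  clear_value N
  have hmul : 0 ≤ lam ^ 2 * mu := by positivity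
  refine ⟨(1 / lam) • v₁ z.1, (1 / lam) • v₂ z.2,
    (lam + lam ^ 2 * mu) • (1 / lam) • v₁ z.1 - lam • z.1,
    (lam + lam ^ 2 * mu) • (1 / lam) • v₂ z.2 - lam • z.2, hx₁τ, hx₂τ, hp₁, hp₂,
    N D₁, N D₂, ?_, ?_, ?_, ?_, ?_⟩
  · intro k
    rw [hN]
    have := H₁.deriv_nonneg hD₁ k
    nlinarith [mul_nonneg hmul (sq_nonneg ‖k‖)]
  · intro k
    rw [hN]
    have := H₂.deriv_nonneg hD₂ k
    nlinarith [mul_nonneg hmul (sq_nonneg ‖k‖)]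
  · intro k
    rw [hN, hN]
    have h3 := hquad k
    have h4 : lam ^ 2 * mu * (‖k.1‖ ^ 2 + ‖k.2‖ ^ 2) ≤ τ / 2 * (‖k.1‖ ^ 2 + ‖k.2‖ ^ 2) := by
      gcongr
    rw [hκ] at h3
    linarith
  · have hv : v₁ z.1 = lam • (1 / lam) • v₁ z.1 := by
      rw [smul_smul, mul_one_div_cancel hlam.ne', one_smul]
    filter_upwards [H₁.jet hD₁ hc₁ hcmu hv hx₁r hτ] with h hh
    rw [hN]
    exact hh
  · have hv : v₂ z.2 = lam • (1 / lam) • v₂ z.2 := by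
      rw [smul_smul, mul_one_div_cancel hlam.ne', one_smul]
    filter_upwards [H₂.jet hD₂ hc₂ hcmu hv hx₂r hτ] with h hh
    rw [hN]
    exact hh

end Sums

/-! ### Bilinear forms and matrices -/

section Matrices

/-- The matrix of a bilinear form in the standard basis. -/
def matOf {d : ℕ} (B : Euc d →L[ℝ] Euc d →L[ℝ] ℝ) : Mat d :=
  Matrix.of fun i j => B (EuclideanSpace.single i 1) (EuclideanSpace.single j 1)

theorem sum_single {d : ℕ} (v : Euc d) :
    ∑ i, v i • (EuclideanSpace.single i 1 : Euc d) = v := by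
  ext j
  simp [Pi.single_apply]

theorem matOf_quad {d : ℕ} (B : Euc d →L[ℝ] Euc d →L[ℝ] ℝ) (v : Fin d → ℝ) :
    v ⬝ᵥ (matOf B).mulVec v = B (WithLp.toLp 2 v) (WithLp.toLp 2 v) := by
  conv_rhs => rw [← sum_single (WithLp.toLp 2 v)]
  simp only [map_sum, map_smul, FunLike.coe_sum, Finset.sum_apply,
    FunLike.coe_smul, Pi.smul_apply, smul_eq_mul, dotProduct, Matrix.mulVec, matOf,
    Matrix.of_apply, Finset.mul_sum]
  rw [Finset.sum_comm]
  refine Finset.sum_congr rfl fun i _ => Finset.sum_congr rfl fun j _ => ?_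
  ring

theorem matOf_isHermitian {d : ℕ} {B : Euc d →L[ℝ] Euc d →L[ℝ] ℝ} (hB : ∀ x y, B x y = B y x) :
    (matOf B).IsHermitian := by
  ext i j
  simp [matOf, hB (EuclideanSpace.single i 1)]

/-- The entries are controlled by the quadratic form, by polarisation. -/
theorem abs_matOf_le {d : ℕ} {B : Euc d →L[ℝ] Euc d →L[ℝ] ℝ} (hB : ∀ x y, B x y = B y x)
    {C : ℝ} (hlo : ∀ k, -(C * ‖k‖ ^ 2) ≤ B k k) (hhi : ∀ k, B k k ≤ C * ‖k‖ ^ 2) (i j : Fin d) :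
    |matOf B i j| ≤ C := by
  have hpar := parallelogram_law_with_norm ℝ (EuclideanSpace.single i 1 : Euc d)
    (EuclideanSpace.single j 1)
  simp only [matOf, Matrix.of_apply]
  have hx : ‖(EuclideanSpace.single i 1 : Euc d)‖ = 1 := by simp
  have hy : ‖(EuclideanSpace.single j 1 : Euc d)‖ = 1 := by simp
  rw [hx, hy] at hpar
  generalize (EuclideanSpace.single i 1 : Euc d) = x at *
  generalize (EuclideanSpace.single j 1 : Euc d) = y at *
  have h1 := hlo (x + y)
  have h2 := hlo (x - y)
  have h3 := hhi (x + y)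
  have h4 := hhi (x - y)
  have h5 : C * ‖x + y‖ ^ 2 + C * ‖x - y‖ ^ 2 = 4 * C := by
    linear_combination C * hpar
  simp only [map_add, map_sub, add_apply, sub_apply] at h1 h2 h3 h4
  rw [hB y x] at h1 h2 h3 h4
  rw [abs_le]
  constructor <;> linarith

/-- A quadratic polynomial with prescribed gradient and Hessian at `x₀`, as a test function. -/
theorem exists_quadratic_test {d : ℕ} (x₀ p : Euc d) {B : Euc d →L[ℝ] Euc d →L[ℝ] ℝ}
    (hB : ∀ x y, B x y = B y x) :
    ∃ φ : Euc d → ℝ, ContDiffAt ℝ 2 φ x₀ ∧ gradient φ x₀ = p ∧ hessM φ x₀ = matOf B ∧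
      ∀ x, φ x = inner ℝ p (x - x₀) + 1 / 2 * B (x - x₀) (x - x₀) := by
  refine ⟨fun x => inner ℝ p (x - x₀) + 1 / 2 * B (x - x₀) (x - x₀), ?_, ?_, ?_, fun _ => rfl⟩
  · have : ContDiff ℝ 2 fun x => B (x - x₀) (x - x₀) :=
      (B.contDiff.comp (contDiff_id.sub contDiff_const)).clm_apply (contDiff_id.sub contDiff_const)
    exact (((contDiff_const.inner ℝ (contDiff_id.sub contDiff_const))).add
      (contDiff_const.mul this)).contDiffAt
  all_goals
    have hd : ∀ x, HasFDerivAt (fun x => inner ℝ p (x - x₀) + 1 / 2 * B (x - x₀) (x - x₀))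
        (innerSL ℝ p + B (x - x₀)) x := by
      intro x
      have hs : HasFDerivAt (fun x : Euc d => x - x₀) (ContinuousLinearMap.id ℝ _) x :=
        (hasFDerivAt_id x).sub_const x₀
      have h1 := (innerSL ℝ p).hasFDerivAt.comp x hs
      have h2 := (((B.hasFDerivAt.comp x hs).clm_apply hs).const_mul (1 / 2 : ℝ))
      refine (h1.add h2).congr_fderiv ?_
      ext k
      simp [hB k]
      ring
  · refine HasGradientAt.gradient ?_
    rw [hasGradientAt_iff_hasFDerivAt]
    refine (hd x₀).congr_fderiv ?_
    ext k
    simp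
  · ext i j
    simp only [hessM, matOf, Matrix.of_apply, iteratedFDeriv_two_apply]
    rw [funext fun x => (hd x).fderiv]
    have : HasFDerivAt (fun x => innerSL ℝ p + B (x - x₀)) B x₀ := by
      have hs : HasFDerivAt (fun x : Euc d => x - x₀) (ContinuousLinearMap.id ℝ _) x₀ :=
        (hasFDerivAt_id x₀).sub_const x₀
      exact (B.hasFDerivAt.comp x₀ hs).const_add _
    rw [this.fderiv]
    simp

/-- The Cauchy–Schwarz/Young step behind the shape of the matrix inequality. -/
theorem quadratic_le_shifted {H : Type*} [NormedAddCommGroup H] [InnerProductSpace ℝ H]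
    {T : H →L[ℝ] H} (hT : ∀ x y, inner ℝ (T x) y = inner ℝ x (T y)) {ε : ℝ} (hε : 0 < ε)
    (z w : H) : inner ℝ (T z) z ≤
      inner ℝ (T w) w + ε * ‖T w‖ ^ 2 + (1 / ε + ‖T‖) * ‖z - w‖ ^ 2 := by
  obtain ⟨k, rfl⟩ : ∃ k, z = w + k := ⟨z - w, by abel⟩
  rw [add_sub_cancel_left, map_add, inner_add_left, inner_add_right, inner_add_right, hT k w,
    real_inner_comm (T w) k]
  have h1 : inner ℝ (T k) k ≤ ‖T‖ * ‖k‖ ^ 2 := by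
    refine (real_inner_le_norm _ _).trans ?_
    nlinarith [T.le_opNorm k, norm_nonneg k]
  have h2 : 2 * inner ℝ (T w) k ≤ ε * ‖T w‖ ^ 2 + 1 / ε * ‖k‖ ^ 2 := by
    have h3 := real_inner_le_norm (T w) k
    have h4 : ε * ‖T w‖ ^ 2 + 1 / ε * ‖k‖ ^ 2 - 2 * (‖T w‖ * ‖k‖)
        = 1 / ε * (ε * ‖T w‖ - ‖k‖) ^ 2 := by
      field_simp
      ring
    have h5 : 0 ≤ 1 / ε * (ε * ‖T w‖ - ‖k‖) ^ 2 := by positivity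
    linarith
  linarith

/-- The quadratic form `⟪T z, z⟫ + ε |T z|² + δ |z|²`, pulled back along `J`, comes from a continuous
bilinear form. -/
theorem exists_form {Z H : Type*} [NormedAddCommGroup Z] [NormedSpace ℝ Z]
    [NormedAddCommGroup H] [InnerProductSpace ℝ H] (T : H →L[ℝ] H) (J : Z →L[ℝ] H) (ε δ : ℝ) :
    ∃ b : Z →L[ℝ] Z →L[ℝ] ℝ,
      ∀ z, b z z = inner ℝ (T (J z)) (J z) + ε * ‖T (J z)‖ ^ 2 + δ * ‖J z‖ ^ 2 := by
  let I : H →L[ℝ] H →L[ℝ] ℝ := innerSL ℝ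
  have hI : ∀ x y, I x y = inner ℝ x y := fun _ _ => rfl
  clear_value I
  refine ⟨I.bilinearComp (T.comp J) J + ε • I.bilinearComp (T.comp J) (T.comp J)
    + δ • I.bilinearComp J J, fun z => ?_⟩
  simp [hI]

/-- The identification of `ℝ^d × ℝ^d` with `ℝ^{2d}`. -/
def flat {d : ℕ} : (Euc d × Euc d) →L[ℝ] EuclideanSpace ℝ (Fin d ⊕ Fin d) :=
  LinearMap.toContinuousLinearMap
    { toFun := fun z => WithLp.toLp 2 (Sum.elim z.1 z.2)
      map_add' := fun z w => by ext (i | i) <;> simp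
      map_smul' := fun t z => by ext (i | i) <;> simp }

theorem flat_apply {d : ℕ} (z : Euc d × Euc d) :
    flat z = WithLp.toLp 2 (Sum.elim z.1 z.2) := rfl

theorem norm_flat_sq {d : ℕ} (z : Euc d × Euc d) : ‖flat z‖ ^ 2 = ‖z.1‖ ^ 2 + ‖z.2‖ ^ 2 := by
  simp [flat_apply, EuclideanSpace.real_norm_sq_eq, Fintype.sum_sum_type]

theorem sum_prodBasis {d : ℕ} (z : Euc d × Euc d) : ∑ i, flat z i • prodBasis i = z := by
  rw [Fintype.sum_sum_type]
  ext j <;> simp [flat_apply, prodBasis, Pi.single_apply, Prod.fst_sum, Prod.snd_sum]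

theorem inner_toEuclideanCLM {n : Type*} [Fintype n] [DecidableEq n] (A : Matrix n n ℝ)
    (x y : EuclideanSpace ℝ n) :
    inner ℝ (Matrix.toEuclideanCLM (𝕜 := ℝ) A x) y = ∑ i, ∑ j, A i j * x j * y i := by
  simp [PiLp.inner_apply, Matrix.ofLp_toEuclideanCLM, Matrix.mulVec, dotProduct,
    Finset.mul_sum]
  refine Finset.sum_congr rfl fun i _ => Finset.sum_congr rfl fun j _ => ?_
  ring

end Matrices

/-! ### Jets at a maximum point and passage to the limit -/

section Limit

theorem hess2_isSymm {d : ℕ} {ψ : Euc d × Euc d → ℝ} {z : Euc d × Euc d}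
    (hψ : ContDiffAt ℝ 2 ψ z) (i j : Fin d ⊕ Fin d) : hess2 ψ z i j = hess2 ψ z j i := by
  simp only [hess2, Matrix.of_apply, iteratedFDeriv_two_apply]
  exact (hψ.isSymmSndFDerivAt (by simp)) _ _

theorem hess2_quad {d : ℕ} (ψ : Euc d × Euc d → ℝ) (z k : Euc d × Euc d) :
    fderiv ℝ (fderiv ℝ ψ) z k k =
      inner ℝ (Matrix.toEuclideanCLM (𝕜 := ℝ) (hess2 ψ z) (flat k)) (flat k) := by
  rw [inner_toEuclideanCLM]
  conv_lhs => rw [← sum_prodBasis k]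
  simp only [map_sum, map_smul, FunLike.coe_sum, Finset.sum_apply,
    FunLike.coe_smul, Pi.smul_apply, smul_eq_mul, Finset.mul_sum, hess2,
    Matrix.of_apply, iteratedFDeriv_two_apply]
  rw [Finset.sum_comm]
  refine Finset.sum_congr rfl fun i _ => Finset.sum_congr rfl fun j _ => ?_
  simp
  ring

theorem fderiv_prod_eq_inner {d : ℕ} {ψ : Euc d × Euc d → ℝ} {xb yb : Euc d}
    (hψ : DifferentiableAt ℝ ψ (xb, yb)) (k : Euc d × Euc d) :
    fderiv ℝ ψ (xb, yb) k = inner ℝ (gradient (fun x => ψ (x, yb)) xb) k.1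
      + inner ℝ (gradient (fun y => ψ (xb, y)) yb) k.2 := by
  have h1 : HasFDerivAt (fun x => ψ (x, yb))
      ((fderiv ℝ ψ (xb, yb)).comp (ContinuousLinearMap.inl ℝ _ _)) xb :=
    HasFDerivAt.comp xb (f := fun x => (x, yb)) hψ.hasFDerivAt (hasFDerivAt_prodMk_left _ _)
  have h2 : HasFDerivAt (fun y => ψ (xb, y))
      ((fderiv ℝ ψ (xb, yb)).comp (ContinuousLinearMap.inr ℝ _ _)) yb :=
    HasFDerivAt.comp yb (f := fun y => (xb, y)) hψ.hasFDerivAt (hasFDerivAt_prodMk_right _ _)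
  rw [inner_gradient_left, inner_gradient_left, h1.fderiv, h2.fderiv]
  simp [← map_add]

/-- Points near `xb` and `yb` where `u` and `-u` have second-order upper bounds with slopes close
to the gradients of `ψ` and with Hessians that satisfy the two-sided matrix inequality up to
`2 δ + τ`. -/
theorem exists_jets {d : ℕ} {u : Euc d → ℝ} {xb yb : Euc d}
    (hux : ∀ᶠ x in 𝓝 xb, ContinuousAt u x) (huy : ∀ᶠ y in 𝓝 yb, ContinuousAt u y)
    {ψ : Euc d × Euc d → ℝ} (hψ : ContDiffAt ℝ 2 ψ (xb, yb))
    (hmax : IsLocalMax (fun z : Euc d × Euc d => (u z.1 - u z.2) - ψ z) (xb, yb))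
    {ε δ τ : ℝ} (hε : 0 < ε) (hδ : 0 < δ) (hτ : 0 < τ) :
    ∃ x₁ x₂ p₁ p₂ : Euc d, ‖x₁‖ < τ ∧ ‖x₂‖ < τ ∧ ‖p₁‖ < τ ∧ ‖p₂‖ < τ ∧
      ∃ N₁ N₂ : Euc d →L[ℝ] Euc d →L[ℝ] ℝ,
        (∀ k, -((1 / ε + matOpNorm (hess2 ψ (xb, yb)) + 2 * δ) * ‖k‖ ^ 2) ≤ N₁ k k) ∧
        (∀ k, -((1 / ε + matOpNorm (hess2 ψ (xb, yb)) + 2 * δ) * ‖k‖ ^ 2) ≤ N₂ k k) ∧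
        (∀ k : Euc d × Euc d, N₁ k.1 k.1 + N₂ k.2 k.2 ≤
          inner ℝ (Matrix.toEuclideanCLM (𝕜 := ℝ) (hess2 ψ (xb, yb)) (flat k)) (flat k)
          + ε * ‖Matrix.toEuclideanCLM (𝕜 := ℝ) (hess2 ψ (xb, yb)) (flat k)‖ ^ 2
          + (2 * δ + τ) * (‖k.1‖ ^ 2 + ‖k.2‖ ^ 2)) ∧
        (∀ᶠ h in 𝓝 (0 : Euc d), u (xb + x₁ + h) ≤ u (xb + x₁)
          + inner ℝ (gradient (fun x => ψ (x, yb)) xb + p₁) h + 1 / 2 * N₁ h h + τ * ‖h‖ ^ 2) ∧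
        (∀ᶠ h in 𝓝 (0 : Euc d), -u (yb + x₂ + h) ≤ -u (yb + x₂)
          + inner ℝ (gradient (fun y => ψ (xb, y)) yb + p₂) h
          + 1 / 2 * N₂ h h + τ * ‖h‖ ^ 2) := by
  set a := gradient (fun x => ψ (x, yb)) xb
  set c := gradient (fun y => ψ (xb, y)) yb
  set A := hess2 ψ (xb, yb) with hA
  set T := Matrix.toEuclideanCLM (𝕜 := ℝ) A with hTdef
  have hT : ∀ x y, inner ℝ (T x) y = inner ℝ x (T y) := by
    intro x y
    rw [real_inner_comm (T y) x, hTdef, inner_toEuclideanCLM, inner_toEuclideanCLM, Finset.sum_comm]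
    refine Finset.sum_congr rfl fun i _ => Finset.sum_congr rfl fun j _ => ?_
    rw [hA, hess2_isSymm hψ]
    ring
  have hder : ∀ᶠ z in 𝓝 (xb, yb), HasFDerivAt ψ (fderiv ℝ ψ z) z := by
    filter_upwards [hψ.eventually (by simp)] with z hz
    exact (hz.differentiableAt (by simp)).hasFDerivAt
  have hder2 : HasFDerivAt (fderiv ℝ ψ) (fderiv ℝ (fderiv ℝ ψ) (xb, yb)) (xb, yb) :=
    ((hψ.fderiv_right (m := 1) (by norm_num)).differentiableAt (by simp)).hasFDerivAt
  have htay := taylor_two hder hder2 (half_pos hδ)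
  have hlim : Tendsto (fun k : Euc d × Euc d => (xb, yb) + k) (𝓝 0) (𝓝 (xb, yb)) := by
    have : Continuous (fun k : Euc d × Euc d => (xb, yb) + k) := by fun_prop
    simpa using this.tendsto 0
  have hall := (htay.and ((hlim.eventually hmax).and (hlim.eventually (hux.prod_nhds huy))))
  obtain ⟨r, hr, hball⟩ := Metric.nhds_basis_closedBall.eventually_iff.1 hall
  obtain ⟨b, hbz⟩ := exists_form T (flat (d := d)) ε (2 * δ)
  have hmem : ∀ {x y : Euc d}, x ∈ closedBall (0 : Euc d) r → y ∈ closedBall (0 : Euc d) r →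
      (x, y) ∈ closedBall (0 : Euc d × Euc d) r := by
    intro x y hx hy
    rw [mem_closedBall_zero_iff] at *
    exact max_le hx hy
  have h0 : (0 : Euc d) ∈ closedBall (0 : Euc d) r := mem_closedBall_self hr.le
  have hlam : 0 < 1 / ε + matOpNorm A + 2 * δ := by
    have : 0 ≤ matOpNorm A := norm_nonneg _
    positivity
  obtain ⟨x₁, x₂, p₁, p₂, hx₁, hx₂, hp₁, hp₂, N₁, N₂, hN₁, hN₂, hN, hj₁, hj₂⟩ :=
    exists_approx_jets (u₁ := fun x => u (xb + x) - u xb - inner ℝ a x)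
      (u₂ := fun y => -u (yb + y) + u yb - inner ℝ c y) hr hlam (by
        intro x hx
        have h1 : ContinuousAt u (xb + x) := (hball (hmem hx h0)).2.2.1
        have h2 : ContinuousAt (fun x => u (xb + x)) x :=
          ContinuousAt.comp (f := fun x => xb + x) h1 (by fun_prop)
        exact ((h2.sub continuousAt_const).sub (by fun_prop)).continuousWithinAt) (by
        intro x hx
        have h1 : ContinuousAt u (yb + x) := (hball (hmem h0 hx)).2.2.2
        have h2 : ContinuousAt (fun x => u (yb + x)) x :=
          ContinuousAt.comp (f := fun x => yb + x) h1 (by fun_prop)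
        exact ((h2.neg.add continuousAt_const).sub (by fun_prop)).continuousWithinAt)
      (by simp) (by simp) b (by
        intro x hx y hy ω
        obtain ⟨h1, h2, -⟩ := hball (hmem hx hy)
        have h3 := (abs_le.1 h1).2
        rw [fderiv_prod_eq_inner (hψ.differentiableAt (by simp)), hess2_quad] at h3
        have h4 := quadratic_le_shifted hT hε (flat (x, y)) (flat ω)
        rw [← map_sub, norm_flat_sq] at h4
        have h5 : ‖((x, y) : Euc d × Euc d)‖ ^ 2 ≤ ‖x‖ ^ 2 + ‖y‖ ^ 2 := by
          rw [Prod.norm_def]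
          rcases max_choice ‖x‖ ‖y‖ with h | h <;> simp only [h] <;>
            nlinarith [sq_nonneg ‖x‖, sq_nonneg ‖y‖]
        -- the Taylor error is moved from `(x, y)` to `ω` and `(x, y) - ω`: hence the `2 * δ`
        have h6 : ∀ x w : Euc d, ‖x‖ ^ 2 ≤ 2 * ‖w‖ ^ 2 + 2 * ‖x - w‖ ^ 2 := by
          intro x w
          have h7 := parallelogram_law_with_norm ℝ w (x - w)
          rw [add_sub_cancel] at h7
          nlinarith [mul_self_nonneg ‖w - (x - w)‖]
        have h7 := mul_le_mul_of_nonneg_left (h5.trans (add_le_add (h6 x ω.1) (h6 y ω.2))) hδ.le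
        rw [hbz, norm_flat_sq]
        simp only [Prod.mk_add_mk, Prod.fst_sub, Prod.snd_sub] at h2 h3 h4 h7 ⊢
        change inner ℝ (T (flat (x, y))) (flat (x, y)) ≤ inner ℝ (T (flat ω)) (flat ω)
          + ε * ‖T (flat ω)‖ ^ 2 + (1 / ε + matOpNorm A) * _ at h4
        linarith) hτ
  refine ⟨x₁, x₂, p₁, p₂, hx₁, hx₂, hp₁, hp₂, N₁, N₂, hN₁, hN₂, fun k => ?_, ?_, ?_⟩
  · have h1 := hN k
    rw [hbz, norm_flat_sq] at h1
    linarith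
  · filter_upwards [hj₁] with h hh
    rw [inner_add_right, ← add_assoc] at hh
    rw [inner_add_left]
    linarith
  · filter_upwards [hj₂] with h hh
    rw [inner_add_right, ← add_assoc] at hh
    rw [inner_add_left]
    linarith

theorem form_eq_dotProduct {n : Type*} [Fintype n] [DecidableEq n] {A : Matrix n n ℝ}
    (hA : ∀ i j, A i j = A j i) (ε : ℝ) (v : n → ℝ) :
    inner ℝ (Matrix.toEuclideanCLM (𝕜 := ℝ) A (WithLp.toLp 2 v)) (WithLp.toLp 2 v)
      + ε * ‖Matrix.toEuclideanCLM (𝕜 := ℝ) A (WithLp.toLp 2 v)‖ ^ 2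
      = v ⬝ᵥ (A + ε • (A * A)).mulVec v := by
  have h1 : ∀ M : Matrix n n ℝ,
      inner ℝ (Matrix.toEuclideanCLM (𝕜 := ℝ) M (WithLp.toLp 2 v)) (WithLp.toLp 2 v)
        = v ⬝ᵥ M.mulVec v := by
    intro M
    simp [PiLp.inner_apply, dotProduct]
  have hAT : A.transpose = A := by
    ext i j
    exact hA j i
  rw [h1, Matrix.add_mulVec, Matrix.smul_mulVec, dotProduct_add, dotProduct_smul, smul_eq_mul,
    ← Matrix.mulVec_mulVec, Matrix.dotProduct_mulVec v A (A.mulVec v), ← Matrix.mulVec_transpose,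
    hAT]
  congr 2
  rw [EuclideanSpace.real_norm_sq_eq]
  simp [dotProduct, sq]

theorem norm_toLp_sq {n : Type*} [Fintype n] (v : n → ℝ) :
    ‖(WithLp.toLp 2 v : EuclideanSpace ℝ n)‖ ^ 2 = v ⬝ᵥ v := by
  rw [EuclideanSpace.real_norm_sq_eq]
  simp [dotProduct, sq]

/-- The symmetrised form `N` increased by `2 τ` times the identity. -/
theorem exists_symm_form {E : Type*} [NormedAddCommGroup E] [InnerProductSpace ℝ E]
    (N : E →L[ℝ] E →L[ℝ] ℝ) (τ : ℝ) :
    ∃ B : E →L[ℝ] E →L[ℝ] ℝ, (∀ x y, B x y = B y x) ∧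
      ∀ k, B k k = N k k + 2 * τ * ‖k‖ ^ 2 := by
  let I : E →L[ℝ] E →L[ℝ] ℝ := innerSL ℝ
  have hI : ∀ x y, I x y = inner ℝ x y := fun _ _ => rfl
  clear_value I
  refine ⟨(1 / 2 : ℝ) • (N + N.flip) + (2 * τ) • I, fun x y => ?_, fun k => ?_⟩
  · simp [hI, real_inner_comm]
    ring
  · simp [hI]
    ring

theorem tendsto_of_norm_sub_lt {E : Type*} [NormedAddCommGroup E] {x : ℕ → E} {x₀ : E}
    (h : ∀ n, ‖x n - x₀‖ < 1 / ((n : ℝ) + 1)) : Tendsto x (hyperfilter ℕ) (𝓝 x₀) := by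
  refine Tendsto.mono_left ?_ Nat.hyperfilter_le_atTop
  rw [tendsto_iff_norm_sub_tendsto_zero]
  exact squeeze_zero (fun _ => norm_nonneg _) (fun n => (h n).le)
    tendsto_one_div_add_atTop_nhds_zero_nat

theorem exists_tendsto_of_entries_le {d : ℕ} {X : ℕ → Mat d} {C : ℝ}
    (h : ∀ n i j, |X n i j| ≤ C) : ∃ X₀ : Mat d, Tendsto X (hyperfilter ℕ) (𝓝 X₀) := by
  have hK : IsCompact (Set.univ.pi fun _ => Set.univ.pi fun _ => Icc (-C) C :
      Set (Fin d → Fin d → ℝ)) :=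
    isCompact_univ_pi fun _ => isCompact_univ_pi fun _ => isCompact_Icc
  obtain ⟨X₀, -, hX₀⟩ := hK.ultrafilter_le_nhds ((hyperfilter ℕ).map X) (by
    rw [le_principal_iff]
    refine Filter.mem_map.2 (Eventually.of_forall fun n => ?_)
    intro i _ j _
    exact abs_le.1 (h n i j))
  exact ⟨X₀, hX₀⟩

theorem continuous_quad {n : Type*} [Fintype n] (v : n → ℝ) :
    Continuous fun X : Matrix n n ℝ => v ⬝ᵥ X.mulVec v := by
  simp only [dotProduct, Matrix.mulVec]
  fun_prop

theorem isHermitian_of_tendsto {d : ℕ} {X : ℕ → Mat d} {X₀ : Mat d}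
    (hX : ∀ n, (X n).IsHermitian) (h : Tendsto X (hyperfilter ℕ) (𝓝 X₀)) :
    X₀.IsHermitian := by
  have h1 : Tendsto (fun n => (X n).conjTranspose) (hyperfilter ℕ) (𝓝 X₀.conjTranspose) :=
    (continuous_id.matrix_conjTranspose.tendsto X₀).comp h
  rw [funext fun n => (hX n).eq] at h1
  exact tendsto_nhds_unique h1 h

end Limit

/-- the Ishii–Lions Lemma (Proposition 3.1). -/
theorem statement3
    (d : ℕ) (hd : 1 ≤ d)
    (G : Euc d → Euc d → Mat d → ℝ)
    (hGc : ContinuousOn (fun z : Euc d × Euc d × Mat d => G z.1 z.2.1 z.2.2)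
      ((ball (0 : Euc d) 1) ×ˢ (univ : Set (Euc d × Mat d))))
    (hGell : ∀ (x p : Euc d) (M N : Mat d), (M - N).PosSemidef → G x p M ≤ G x p N)
    (u : Euc d → ℝ) (hu : ContinuousOn u (ball 0 1))
    (husub : ∀ x₀ ∈ ball (0 : Euc d) 1, ∀ φ : Euc d → ℝ, ContDiffAt ℝ 2 φ x₀ →
      IsLocalMax (fun x => u x - φ x) x₀ → G x₀ (gradient φ x₀) (hessM φ x₀) ≤ 0)
    (husuper : ∀ x₀ ∈ ball (0 : Euc d) 1, ∀ φ : Euc d → ℝ, ContDiffAt ℝ 2 φ x₀ →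
      IsLocalMin (fun x => u x - φ x) x₀ → 0 ≤ G x₀ (gradient φ x₀) (hessM φ x₀))
    (Ω : Set (Euc d)) (hΩo : IsOpen Ω) (hΩ : Ω ⊆ ball 0 1)
    (ψ : Euc d × Euc d → ℝ)
    (hψ : ∃ U : Set (Euc d × Euc d), IsOpen U ∧ (closure Ω) ×ˢ (closure Ω) ⊆ U ∧
      ContDiffOn ℝ 2 ψ U)
    (xb yb : Euc d) (hxb : xb ∈ Ω) (hyb : yb ∈ Ω)
    (hmax : IsLocalMaxOn (fun z : Euc d × Euc d => (u z.1 - u z.2) - ψ z) (Ω ×ˢ Ω) (xb, yb)) :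
    ∀ ε > (0:ℝ), ∃ X Y : Mat d, X.IsHermitian ∧ Y.IsHermitian ∧
      G xb (gradient (fun x => ψ (x, yb)) xb) X ≤ 0 ∧
      0 ≤ G yb (-(gradient (fun y => ψ (xb, y)) yb)) Y ∧
      MatLE (-((1/ε + matOpNorm (hess2 ψ (xb, yb))) •
          (1 : Matrix (Fin d ⊕ Fin d) (Fin d ⊕ Fin d) ℝ)))
        (Matrix.fromBlocks X 0 0 (-Y)) ∧
      MatLE (Matrix.fromBlocks X 0 0 (-Y))
        (hess2 ψ (xb, yb) + ε • (hess2 ψ (xb, yb) * hess2 ψ (xb, yb))) := by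
  intro ε hε
  have hψ' : ContDiffAt ℝ 2 ψ (xb, yb) := by
    obtain ⟨U, hU, hsub, hc⟩ := hψ
    exact hc.contDiffAt (hU.mem_nhds (hsub ⟨subset_closure hxb, subset_closure hyb⟩))
  have hmax' : IsLocalMax (fun z : Euc d × Euc d => (u z.1 - u z.2) - ψ z) (xb, yb) :=
    hmax.isLocalMax ((hΩo.prod hΩo).mem_nhds ⟨hxb, hyb⟩)
  have hcont : ∀ x ∈ Ω, ∀ᶠ y in 𝓝 x, ContinuousAt u y := fun x hx => by
    filter_upwards [isOpen_ball.mem_nhds (hΩ hx)] with y hy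
    exact hu.continuousAt (isOpen_ball.mem_nhds hy)
  have hsymm := hess2_isSymm hψ'
  obtain ⟨ρ, hρ, hρx, hρy⟩ : ∃ ρ > 0, ball xb ρ ⊆ ball 0 1 ∧ ball yb ρ ⊆ ball 0 1 := by
    obtain ⟨ρ₁, h1, h2⟩ := Metric.isOpen_iff.1 isOpen_ball xb (hΩ hxb)
    obtain ⟨ρ₂, h3, h4⟩ := Metric.isOpen_iff.1 isOpen_ball yb (hΩ hyb)
    exact ⟨min ρ₁ ρ₂, lt_min h1 h3, (ball_subset_ball (min_le_left _ _)).trans h2,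
      (ball_subset_ball (min_le_right _ _)).trans h4⟩
  set a := gradient (fun x => ψ (x, yb)) xb with ha
  set c := gradient (fun y => ψ (xb, y)) yb with hc
  set A := hess2 ψ (xb, yb) with hA
  set lam := 1 / ε + matOpNorm A with hlam
  have hlam0 : 0 ≤ lam := add_nonneg (by positivity) (norm_nonneg _)
  obtain ⟨b, hb⟩ := exists_form (Matrix.toEuclideanCLM (𝕜 := ℝ) A) (flat (d := d)) ε 0
  obtain ⟨C, hC, hbC⟩ := bilin_bound b
  -- the conclusion up to errors of order `1 / (n + 1)`, with entries bounded uniformly in `n`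
  have key : ∀ n : ℕ, ∃ x y p q : Euc d, ∃ X Y : Mat d,
      ‖x - xb‖ < 1 / ((n : ℝ) + 1) ∧ ‖y - yb‖ < 1 / ((n : ℝ) + 1) ∧
      ‖p - a‖ < 1 / ((n : ℝ) + 1) ∧ ‖q - -c‖ < 1 / ((n : ℝ) + 1) ∧
      X.IsHermitian ∧ Y.IsHermitian ∧ (∀ i j, |X i j| ≤ C + 5 + lam + 2) ∧
      (∀ i j, |Y i j| ≤ C + 5 + lam + 2) ∧ G x p X ≤ 0 ∧ 0 ≤ G y q Y ∧
      (∀ v, -((lam + 2 * (1 / ((n : ℝ) + 1))) * v ⬝ᵥ v) ≤ v ⬝ᵥ X.mulVec v) ∧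
      (∀ v, -((lam + 2 * (1 / ((n : ℝ) + 1))) * v ⬝ᵥ v) ≤ -(v ⬝ᵥ Y.mulVec v)) ∧
      (∀ v w, v ⬝ᵥ X.mulVec v - w ⬝ᵥ Y.mulVec w ≤
        Sum.elim v w ⬝ᵥ (A + ε • (A * A)).mulVec (Sum.elim v w)
          + 5 * (1 / ((n : ℝ) + 1)) * (v ⬝ᵥ v + w ⬝ᵥ w)) := by
    intro n
    have hδ : 0 < 1 / ((n : ℝ) + 1) := by positivity
    have hδ1 : 1 / ((n : ℝ) + 1) ≤ 1 := by
      rw [div_le_one (by positivity)]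
      have : (0 : ℝ) ≤ n := n.cast_nonneg
      linarith
    generalize 1 / ((n : ℝ) + 1) = δ at hδ hδ1 ⊢
    have hτ : 0 < min δ ρ := lt_min hδ hρ
    obtain ⟨x, y, p, q, hx, hy, hp, hq, N₁, N₂, hN₁, hN₂, hN, hj₁, hj₂⟩ :=
      exists_jets (hcont xb hxb) (hcont yb hyb) hψ' hmax' hε hδ hτ
    have hτδ : min δ ρ ≤ δ := min_le_left _ _
    have hτρ : min δ ρ ≤ ρ := min_le_right _ _
    generalize min δ ρ = τ at *
    obtain ⟨B₁, hB₁s, hB₁⟩ := exists_symm_form N₁ τ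
    obtain ⟨B₂, hB₂s, hB₂⟩ := exists_symm_form N₂ τ
    have hnegs : ∀ x y, (-B₂) x y = (-B₂) y x := fun x y => by simp [hB₂s x y]
    have hup : ∀ k : Euc d × Euc d, B₁ k.1 k.1 + B₂ k.2 k.2 ≤
        b k k + 5 * δ * (‖k.1‖ ^ 2 + ‖k.2‖ ^ 2) := by
      intro k
      have h1 := hN k
      rw [hB₁, hB₂, hb]
      nlinarith [sq_nonneg ‖k.1‖, sq_nonneg ‖k.2‖]
    have hlo₁ : ∀ k, -((lam + 2 * δ) * ‖k‖ ^ 2) ≤ B₁ k k := fun k => by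
      rw [hB₁]
      nlinarith [hN₁ k, sq_nonneg ‖k‖]
    have hlo₂ : ∀ k, -((lam + 2 * δ) * ‖k‖ ^ 2) ≤ B₂ k k := fun k => by
      rw [hB₂]
      nlinarith [hN₂ k, sq_nonneg ‖k‖]
    have hhi₁ : ∀ k, B₁ k k ≤ (C + 5) * ‖k‖ ^ 2 := fun k => by
      have h1 := hup (k, 0)
      have h2 := hbC (k, 0)
      simp [Prod.norm_def] at h1 h2
      nlinarith [sq_nonneg ‖k‖]
    have hhi₂ : ∀ k, B₂ k k ≤ (C + 5) * ‖k‖ ^ 2 := fun k => by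
      have h1 := hup (0, k)
      have h2 := hbC (0, k)
      simp [Prod.norm_def] at h1 h2
      nlinarith [sq_nonneg ‖k‖]
    have hquadY : ∀ v, v ⬝ᵥ (matOf (-B₂)).mulVec v
        = -B₂ (WithLp.toLp 2 v) (WithLp.toLp 2 v) := fun v => by
      rw [matOf_quad]
      rfl
    refine ⟨xb + x, yb + y, a + p, -(c + q), matOf B₁, matOf (-B₂), ?_, ?_, ?_, ?_,
      matOf_isHermitian hB₁s, matOf_isHermitian hnegs, ?_, ?_, ?_, ?_, ?_, ?_, ?_⟩
    · simpa using hx.trans_le hτδ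
    · simpa using hy.trans_le hτδ
    · simpa using hp.trans_le hτδ
    · rw [neg_sub_neg, sub_add_cancel_left, norm_neg]
      exact hq.trans_le hτδ
    · refine abs_matOf_le hB₁s (fun k => ?_) fun k => ?_
      · nlinarith [hlo₁ k, sq_nonneg ‖k‖]
      · nlinarith [hhi₁ k, sq_nonneg ‖k‖]
    · refine abs_matOf_le hnegs (fun k => ?_) fun k => ?_
      · change _ ≤ -B₂ k k
        nlinarith [hhi₂ k, sq_nonneg ‖k‖]
      · change -B₂ k k ≤ _
        nlinarith [hlo₂ k, sq_nonneg ‖k‖]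
    · obtain ⟨φ, hφ, hφg, hφh, hφe⟩ := exists_quadratic_test (xb + x) (a + p) hB₁s
      rw [← hφg, ← hφh]
      refine husub _ (hρx (by simpa using hx.trans_le hτρ)) φ hφ ?_
      have hlim : Tendsto (fun z => z - (xb + x)) (𝓝 (xb + x)) (𝓝 0) := by
        have : Continuous (fun z => z - (xb + x)) := by fun_prop
        simpa using this.tendsto (xb + x)
      filter_upwards [hlim.eventually hj₁] with z hz
      rw [add_sub_cancel, ← ha] at hz
      have h1 := hφe z
      have h2 : φ (xb + x) = 0 := by rw [hφe, sub_self]; simp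
      rw [hB₁] at h1
      change u z - φ z ≤ u (xb + x) - φ (xb + x)
      linarith
    · obtain ⟨φ, hφ, hφg, hφh, hφe⟩ := exists_quadratic_test (yb + y) (-(c + q)) hnegs
      rw [← hφg, ← hφh]
      refine husuper _ (hρy (by simpa using hy.trans_le hτρ)) φ hφ ?_
      have hlim : Tendsto (fun z => z - (yb + y)) (𝓝 (yb + y)) (𝓝 0) := by
        have : Continuous (fun z => z - (yb + y)) := by fun_prop
        simpa using this.tendsto (yb + y)
      filter_upwards [hlim.eventually hj₂] with z hz
      rw [add_sub_cancel, ← hc] at hz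
      have h1 := hφe z
      have h2 : φ (yb + y) = 0 := by rw [hφe, sub_self]; simp
      rw [neg_apply, neg_apply, hB₂, inner_neg_left] at h1
      change u (yb + y) - φ (yb + y) ≤ u z - φ z
      linarith
    · intro v
      rw [matOf_quad, ← norm_toLp_sq]
      exact hlo₁ _
    · intro v
      rw [hquadY, ← norm_toLp_sq, neg_neg]
      exact hlo₂ _
    · intro v w
      have h1 := hup (WithLp.toLp 2 v, WithLp.toLp 2 w)
      rw [hb] at h1
      have h2 := form_eq_dotProduct hsymm ε (Sum.elim v w)
      rw [matOf_quad, hquadY, ← h2, ← norm_toLp_sq, ← norm_toLp_sq]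
      rw [flat_apply] at h1
      simp only [zero_mul, add_zero] at h1
      linarith
  choose x y p q X Y hx hy hp hq hX hY hXC hYC hGX hGY hXlo hYlo hup using key
  obtain ⟨X₀, hX₀⟩ := exists_tendsto_of_entries_le hXC
  obtain ⟨Y₀, hY₀⟩ := exists_tendsto_of_entries_le hYC
  have hX₀h := isHermitian_of_tendsto hX hX₀
  have hY₀h := isHermitian_of_tendsto hY hY₀
  have hqX : ∀ v, Tendsto (fun n => v ⬝ᵥ (X n).mulVec v) (hyperfilter ℕ)
      (𝓝 (v ⬝ᵥ X₀.mulVec v)) := fun v => ((continuous_quad v).tendsto X₀).comp hX₀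
  have hqY : ∀ v, Tendsto (fun n => v ⬝ᵥ (Y n).mulVec v) (hyperfilter ℕ)
      (𝓝 (v ⬝ᵥ Y₀.mulVec v)) := fun v => ((continuous_quad v).tendsto Y₀).comp hY₀
  have hδ0 : Tendsto (fun n : ℕ => 1 / ((n : ℝ) + 1)) (hyperfilter ℕ) (𝓝 0) :=
    tendsto_one_div_add_atTop_nhds_zero_nat.mono_left Nat.hyperfilter_le_atTop
  have hlolim : ∀ s : ℝ, Tendsto (fun n : ℕ => -((lam + 2 * (1 / ((n : ℝ) + 1))) * s))
      (hyperfilter ℕ) (𝓝 (-(lam * s))) := fun s => by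
    simpa using (((hδ0.const_mul 2).const_add lam).mul_const s).neg
  have hX₀lo : ∀ v, -(lam * v ⬝ᵥ v) ≤ v ⬝ᵥ X₀.mulVec v := fun v =>
    le_of_tendsto_of_tendsto' (hlolim _) (hqX v) fun n => hXlo n v
  have hY₀lo : ∀ v, -(lam * v ⬝ᵥ v) ≤ -(v ⬝ᵥ Y₀.mulVec v) := fun v =>
    le_of_tendsto_of_tendsto' (hlolim _) (hqY v).neg fun n => hYlo n v
  have hup₀ : ∀ v w, v ⬝ᵥ X₀.mulVec v - w ⬝ᵥ Y₀.mulVec w ≤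
      Sum.elim v w ⬝ᵥ (A + ε • (A * A)).mulVec (Sum.elim v w) := fun v w => by
    refine le_of_tendsto_of_tendsto' ((hqX v).sub (hqY w)) ?_ fun n => hup n v w
    simpa using ((hδ0.const_mul 5).mul_const (v ⬝ᵥ v + w ⬝ᵥ w)).const_add
      (Sum.elim v w ⬝ᵥ (A + ε • (A * A)).mulVec (Sum.elim v w))
  have hopen : IsOpen ((ball (0 : Euc d) 1) ×ˢ (univ : Set (Euc d × Mat d))) :=
    isOpen_ball.prod isOpen_univ
  have hGlim : ∀ {x p : ℕ → Euc d} {X : ℕ → Mat d} {x₀ p₀ : Euc d} {X₀ : Mat d}, x₀ ∈ Ω →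
      Tendsto x (hyperfilter ℕ) (𝓝 x₀) → Tendsto p (hyperfilter ℕ) (𝓝 p₀) →
      Tendsto X (hyperfilter ℕ) (𝓝 X₀) →
      Tendsto (fun n => G (x n) (p n) (X n)) (hyperfilter ℕ) (𝓝 (G x₀ p₀ X₀)) := by
    intro x p X x₀ p₀ X₀ hx₀ hx hp hX
    have h1 : ContinuousAt (fun z : Euc d × Euc d × Mat d => G z.1 z.2.1 z.2.2) (x₀, p₀, X₀) :=
      hGc.continuousAt (hopen.mem_nhds ⟨hΩ hx₀, mem_univ _⟩)
    exact Tendsto.comp (f := fun n => (x n, p n, X n)) h1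
      (hx.prodMk_nhds (hp.prodMk_nhds hX))
  have hblock : (Matrix.fromBlocks X₀ 0 0 (-Y₀)).IsHermitian :=
    hX₀h.fromBlocks (by simp) hY₀h.neg
  have hblockq : ∀ s : Fin d ⊕ Fin d → ℝ, s ⬝ᵥ (Matrix.fromBlocks X₀ 0 0 (-Y₀)).mulVec s
      = (s ∘ Sum.inl) ⬝ᵥ X₀.mulVec (s ∘ Sum.inl) - (s ∘ Sum.inr) ⬝ᵥ Y₀.mulVec (s ∘ Sum.inr) := by
    intro s
    rw [Matrix.fromBlocks_mulVec]
    simp [dotProduct, Fintype.sum_sum_type, Matrix.neg_mulVec, sub_eq_add_neg]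
  have hAh : A.IsHermitian := by
    ext i j
    exact hsymm j i
  refine ⟨X₀, Y₀, hX₀h, hY₀h,
    le_of_tendsto' (hGlim hxb (tendsto_of_norm_sub_lt hx) (tendsto_of_norm_sub_lt hp) hX₀) hGX,
    ge_of_tendsto' (hGlim hyb (tendsto_of_norm_sub_lt hy) (tendsto_of_norm_sub_lt hq) hY₀) hGY,
    ?_, ?_⟩
  · refine Matrix.PosSemidef.of_dotProduct_mulVec_nonneg (hblock.sub ?_) fun s => ?_
    · simp [Matrix.IsHermitian]
    · have h1 := hX₀lo (s ∘ Sum.inl)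
      have h2 := hY₀lo (s ∘ Sum.inr)
      have h3 : s ⬝ᵥ s = (s ∘ Sum.inl) ⬝ᵥ (s ∘ Sum.inl) + (s ∘ Sum.inr) ⬝ᵥ (s ∘ Sum.inr) := by
        simp [dotProduct, Fintype.sum_sum_type]
      rw [star_trivial, Matrix.sub_mulVec, dotProduct_sub, hblockq, Matrix.neg_mulVec,
        Matrix.smul_mulVec, Matrix.one_mulVec, dotProduct_neg, dotProduct_smul, smul_eq_mul, h3]
      linarith
  · refine Matrix.PosSemidef.of_dotProduct_mulVec_nonneg (Matrix.IsHermitian.sub ?_ hblock)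
      fun s => ?_
    · refine hAh.add ?_
      rw [Matrix.IsHermitian, Matrix.conjTranspose_smul, Matrix.conjTranspose_mul, hAh.eq,
        star_trivial]
    · have h1 := hup₀ (s ∘ Sum.inl) (s ∘ Sum.inr)
      rw [Sum.elim_comp_inl_inr] at h1
      rw [star_trivial, Matrix.sub_mulVec, dotProduct_sub, hblockq]
      linarith

end
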